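/- arXiv:1307.6192 — 7 statements merged into one kernel-verified Lean document; each statement's English description precedes it below -/
import Mathlib

section
/- For every positive integer n there exists a 321-avoiding permutation ρ of length n² such that every 321-avoiding permutation of length n is contained in ρ as a pattern (i.e., ρ is a proper n-universal permutation for the set of 321-avoiding permutations). -/
/-- A permutation of length `n` (a bijection of `Fin n`) is 321-avoiding if there are
no positions `i < j < k` with `π i > π j > π k`. -/
def Avoids321 {n : ℕ} (π : Equiv.Perm (Fin n)) : Prop :=
  ¬ ∃ i j k : Fin n, i < j ∧ j < k ∧ π k < π j ∧ π j < π i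

/-- `π` contains `σ` as a pattern: there is a strictly increasing choice of positions
in `π` whose entries are order-isomorphic to `σ`. -/
def HasPattern {n k : ℕ} (π : Equiv.Perm (Fin n)) (σ : Equiv.Perm (Fin k)) : Prop :=
  ∃ f : Fin k → Fin n, StrictMono f ∧ ∀ a b : Fin k, σ a < σ b ↔ π (f a) < π (f b)

def UpperPt {n : ℕ} (π : Equiv.Perm (Fin n)) (x : Fin n) : Prop := ∀ y, y < x → π y < π x

open Classical in
noncomputable def cellIdx {n : ℕ} (π : Equiv.Perm (Fin n)) (x : Fin n) : ℕ :=
  max (if UpperPt π x then 0 else 1)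
    (Finset.univ.sup (fun y : Fin n =>
      if _h : y < x ∧ π y < π x ∧ (UpperPt π y ↔ ¬ UpperPt π x) then cellIdx π y + 1 else 0))
termination_by x.val
decreasing_by exact _h.1

section cells
variable {n : ℕ} {π : Equiv.Perm (Fin n)}

theorem cellIdx_lt_of {x y : Fin n} (h1 : y < x) (h2 : π y < π x)
    (h3 : UpperPt π y ↔ ¬ UpperPt π x) : cellIdx π y + 1 ≤ cellIdx π x := by
  classical
  rw [cellIdx.eq_1 π x]
  refine le_trans ?_ (le_max_right _ _)
  have := Finset.le_sup (f := fun y : Fin n =>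
      if _h : y < x ∧ π y < π x ∧ (UpperPt π y ↔ ¬ UpperPt π x) then cellIdx π y + 1 else 0)
      (Finset.mem_univ y)
  simpa only [dif_pos (show y < x ∧ π y < π x ∧ (UpperPt π y ↔ ¬ UpperPt π x) from ⟨h1, h2, h3⟩)]
    using this

theorem cellIdx_cases (x : Fin n) :
    (UpperPt π x ∧ cellIdx π x = 0) ∨ (¬ UpperPt π x ∧ cellIdx π x = 1) ∨
    ∃ y, y < x ∧ π y < π x ∧ (UpperPt π y ↔ ¬ UpperPt π x) ∧ cellIdx π x = cellIdx π y + 1 := by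
  classical
  by_cases hs : (Finset.univ.sup (fun y : Fin n =>
      if _h : y < x ∧ π y < π x ∧ (UpperPt π y ↔ ¬ UpperPt π x) then cellIdx π y + 1 else 0))
      ≤ (if UpperPt π x then 0 else 1)
  · have h := cellIdx.eq_1 π x
    rw [max_eq_left hs] at h
    by_cases hu : UpperPt π x
    · left; rw [if_pos hu] at h; exact ⟨hu, h⟩
    · right; left; rw [if_neg hu] at h; exact ⟨hu, h⟩
  · right; right
    have h := cellIdx.eq_1 π x
    rw [max_eq_right (le_of_not_ge hs)] at h
    obtain ⟨y, -, hy⟩ := Finset.exists_mem_eq_sup (Finset.univ : Finset (Fin n)) ⟨x, Finset.mem_univ x⟩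
      (fun y : Fin n =>
      if _h : y < x ∧ π y < π x ∧ (UpperPt π y ↔ ¬ UpperPt π x) then cellIdx π y + 1 else 0)
    rw [hy] at h hs
    by_cases hc : y < x ∧ π y < π x ∧ (UpperPt π y ↔ ¬ UpperPt π x)
    · refine ⟨y, hc.1, hc.2.1, hc.2.2, ?_⟩
      simpa only [dif_pos hc] using h
    · simp only [dif_neg hc] at hs
      exact absurd (Nat.zero_le _) hs

theorem cellIdx_parity (x : Fin n) : UpperPt π x ↔ cellIdx π x % 2 = 0 := by
  induction x using WellFoundedLT.induction with
  | ind x ih =>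
    rcases cellIdx_cases (π := π) x with ⟨h, h'⟩ | ⟨h, h'⟩ | ⟨y, h1, h2, h3, h4⟩
    · simp [h, h']
    · simp [h, h']
    · have := ih y h1
      rw [h4]
      by_cases hx : UpperPt π x
      · have : ¬ (cellIdx π y % 2 = 0) := by tauto
        simp only [hx, true_iff]; omega
      · have : (cellIdx π y % 2 = 0) := by tauto
        simp only [hx, false_iff]; omega

theorem not_upper {x : Fin n} (h : ¬ UpperPt π x) : ∃ y, y < x ∧ π x < π y := by
  unfold UpperPt at h
  push Not at h
  obtain ⟨y, h1, h2⟩ := h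
  exact ⟨y, h1, lt_of_le_of_ne h2 (fun e => h1.ne (π.injective e).symm)⟩

theorem lower_mono (hπ : Avoids321 π) {x y : Fin n} (hx : ¬ UpperPt π x)
    (h : x < y) : π x < π y := by
  obtain ⟨z, hz, hz'⟩ := not_upper hx
  by_contra hc
  exact hπ ⟨z, x, y, hz, h, lt_of_le_of_ne (not_lt.1 hc) (fun e => h.ne (π.injective e).symm), hz'⟩

theorem same_mono (hπ : Avoids321 π) {x y : Fin n} (hxy : UpperPt π x ↔ UpperPt π y)
    (h : x < y) : π x < π y := by
  by_cases hx : UpperPt π x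
  · exact (hxy.1 hx) x h
  · exact lower_mono hπ hx h

theorem cellIdx_mono (hπ : Avoids321 π) {x y : Fin n} (hxy : UpperPt π x ↔ UpperPt π y)
    (h : x < y) : cellIdx π x ≤ cellIdx π y := by
  have hv := same_mono hπ hxy h
  rcases cellIdx_cases (π := π) x with ⟨_, h'⟩ | ⟨h0, h'⟩ | ⟨z, h1, h2, h3, h4⟩
  · omega
  · have := (cellIdx_parity (π := π) y).not.1 (by tauto)
    omega
  · rw [h4]
    exact cellIdx_lt_of (h1.trans h) (h2.trans hv) (by tauto)

theorem same_mono_iff (hπ : Avoids321 π) {x y : Fin n} (hxy : UpperPt π x ↔ UpperPt π y)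
    (h : π x < π y) : x < y := by
  by_contra hc
  rcases (not_lt.1 hc).lt_or_eq with h1 | h1
  · exact absurd (same_mono hπ hxy.symm h1) h.not_gt
  · subst h1; exact absurd h (lt_irrefl _)

theorem cellIdx_sw (hπ : Avoids321 π) {x y : Fin n} (h : x < y) (h' : π x < π y) :
    cellIdx π x ≤ cellIdx π y := by
  by_cases hxy : UpperPt π x ↔ UpperPt π y
  · exact cellIdx_mono hπ hxy h
  · have := cellIdx_lt_of h h' (by tauto)
    omega

theorem cellIdx_inv (hπ : Avoids321 π) {a b : Fin n} (h : a < b) (h' : π b < π a) :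
    UpperPt π a ∧ ¬ UpperPt π b ∧ cellIdx π b ≤ cellIdx π a + 1 ∧
      cellIdx π a ≤ cellIdx π b + 1 := by
  have hb : ¬ UpperPt π b := fun hb => absurd (hb a h) h'.not_gt
  have ha : UpperPt π a := by
    by_contra ha
    exact absurd (lower_mono hπ ha h) h'.not_gt
  refine ⟨ha, hb, ?_, ?_⟩
  · rcases cellIdx_cases (π := π) b with ⟨h0, _⟩ | ⟨h0, h'⟩ | ⟨z, h1, h2, h3, h4⟩
    · exact absurd h0 hb
    · omega
    · have hz : UpperPt π z := h3.2 hb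
      have hza := same_mono_iff hπ (x := z) (y := a) (by tauto) (h2.trans h')
      have := cellIdx_mono hπ (x := z) (y := a) (by tauto) hza
      omega
  · rcases cellIdx_cases (π := π) a with ⟨h0, _⟩ | ⟨h0, h'⟩ | ⟨z, h1, h2, h3, h4⟩
    · omega
    · exact absurd ha h0
    · have := cellIdx_mono hπ (x := z) (y := b) (by tauto) (h1.trans h)
      omega

theorem cellIdx_lt (x : Fin n) : cellIdx π x < n := by
  classical
  have key : ∀ x : Fin n, cellIdx π x ≤
      (Finset.univ.filter (fun z => z < x ∨ π z < π x)).card := by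
    intro x
    induction x using WellFoundedLT.induction with
    | ind x ih =>
      rcases cellIdx_cases (π := π) x with ⟨h, h'⟩ | ⟨h, h'⟩ | ⟨y, h1, h2, h3, h4⟩
      · omega
      · obtain ⟨z, hz, _⟩ := not_upper h
        rw [h']
        exact Finset.card_pos.2 ⟨z, by simp [hz]⟩
      · rw [h4]
        refine lt_of_le_of_lt (ih y h1) (Finset.card_lt_card ?_)
        rw [Finset.ssubset_iff_of_subset]
        · exact ⟨y, by simp [h1], by simp⟩
        · intro z
          simp only [Finset.mem_filter, Finset.mem_univ, true_and]
          rintro (h | h)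
          · exact Or.inl (h.trans h1)
          · exact Or.inr (h.trans h2)
  refine lt_of_le_of_lt (key x) ?_
  have : (Finset.univ.filter (fun z => z < x ∨ π z < π x)).card <
      (Finset.univ : Finset (Fin n)).card := by
    apply Finset.card_lt_card
    rw [Finset.ssubset_iff_of_subset (Finset.subset_univ _)]
    exact ⟨x, by simp, by simp⟩
  simpa using this

theorem exists_cells (hπ : Avoids321 π) : ∃ c : Fin n → ℕ, (∀ x, c x < n) ∧
    (∀ a b, c a = c b → a < b → π a < π b) ∧
    (∀ a b, c a + 2 ≤ c b → a < b ∧ π a < π b) ∧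
    (∀ a b, c b = c a + 1 → c a % 2 = 0 → a < b) ∧
    (∀ a b, c b = c a + 1 → c a % 2 = 1 → π a < π b) := by
  have tri : ∀ a b, cellIdx π a < cellIdx π b →
      (a < b ∧ π a < π b) ∨ (a < b ∧ π b < π a) ∨ (b < a ∧ π a < π b) := by
    intro a b h
    have hne : a ≠ b := by rintro rfl; omega
    have hne' : π a ≠ π b := fun e => hne (π.injective e)
    rcases lt_or_gt_of_ne hne with h1 | h1 <;> rcases lt_or_gt_of_ne hne' with h2 | h2
    · tauto
    · tauto
    · tauto
    · have := cellIdx_sw hπ h1 h2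
      omega
  refine ⟨cellIdx π, cellIdx_lt, ?_, ?_, ?_, ?_⟩
  · intro a b h
    exact same_mono hπ (by rw [cellIdx_parity, cellIdx_parity, h])
  · intro a b h
    rcases tri a b (by omega) with h1 | ⟨h1, h2⟩ | ⟨h1, h2⟩
    · exact h1
    · have := cellIdx_inv hπ h1 h2
      omega
    · have := cellIdx_inv hπ h1 h2
      omega
  · intro a b h hp
    rcases tri a b (by omega) with h1 | ⟨h1, h2⟩ | ⟨h1, h2⟩
    · exact h1.1
    · exact h1
    · have := cellIdx_inv hπ h1 h2
      rw [cellIdx_parity, cellIdx_parity] at this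
      omega
  · intro a b h hp
    rcases tri a b (by omega) with h1 | ⟨h1, h2⟩ | ⟨h1, h2⟩
    · exact h1.2
    · have := cellIdx_inv hπ h1 h2
      rw [cellIdx_parity, cellIdx_parity] at this
      omega
    · exact h2

theorem exists_frac (c : Fin n → ℕ) (h1 : ∀ a b, c a = c b → a < b → π a < π b) (m : ℕ) :
    ∃ F : Fin n → ℕ, (∀ a b, c a ≤ m → c a = c b → a < b → F a < F b) ∧
    (∀ a b, c b ≤ m → c b = c a + 1 → (a < b ∧ π a < π b) → F a < F b) ∧
    (∀ a b, c b ≤ m → c b = c a + 1 → ¬ (a < b ∧ π a < π b) → F b < F a) := by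
  classical
  induction m with
  | zero =>
    refine ⟨fun a => a.val, fun a b _ _ h => h, fun a b h h' => by omega, fun a b h h' => by omega⟩
  | succ m ih =>
    obtain ⟨F, f1, f2, f3⟩ := ih
    let S : Fin n → Finset (Fin n) := fun b =>
      Finset.univ.filter (fun a => c b = c a + 1 ∧ a < b ∧ π a < π b)
    let G : Fin n → ℕ := fun b => (S b).sup (fun a => F a + 1)
    have G1 : ∀ a b, c b = c a + 1 → a < b ∧ π a < π b → F a + 1 ≤ G b := by
      intro a b h h'
      exact Finset.le_sup (f := fun a => F a + 1) (by simp [S, h, h'])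
    have G2 : ∀ a b, c b = m + 1 → c b = c a + 1 → ¬ (a < b ∧ π a < π b) → G b ≤ F a := by
      intro a b hm h h'
      refine Finset.sup_le ?_
      intro a' ha'
      simp only [S, Finset.mem_filter, Finset.mem_univ, true_and] at ha'
      obtain ⟨q1, q2, q3⟩ := ha'
      refine f1 a' a (by omega) (by omega) ?_
      by_contra hc
      rcases (not_lt.1 hc).lt_or_eq with h2 | h2
      · exact h' ⟨h2.trans q2, (h1 _ _ (by omega) h2).trans q3⟩
      · subst h2; exact h' ⟨q2, q3⟩
    have G3 : ∀ b b', c b = c b' → b < b' → G b ≤ G b' := by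
      intro b b' h h'
      apply Finset.sup_mono
      intro a
      simp only [S, Finset.mem_filter, Finset.mem_univ, true_and]
      rintro ⟨q1, q2, q3⟩
      exact ⟨by omega, q2.trans h', q3.trans (h1 _ _ h h')⟩
    refine ⟨fun x => if c x = m + 1 then (n + 1) * G x + x.val + 1 else (n + 1) * (F x + 1),
      ?_, ?_, ?_⟩
    · intro a b ha hab h
      dsimp only
      by_cases hm : c a = m + 1
      · rw [if_pos hm, if_pos (by omega)]
        have := Nat.mul_le_mul_left (n + 1) (G3 a b hab h)
        have : a.val < b.val := h
        omega
      · rw [if_neg hm, if_neg (by omega)]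
        exact Nat.mul_lt_mul_of_pos_left (by have := f1 a b (by omega) hab h; omega) (by omega)
    · intro a b hb hab h
      dsimp only
      rw [if_neg (show ¬ c a = m + 1 by omega)]
      by_cases hm : c b = m + 1
      · rw [if_pos hm]
        have := Nat.mul_le_mul_left (n + 1) (G1 a b hab h)
        omega
      · rw [if_neg hm]
        exact Nat.mul_lt_mul_of_pos_left (by have := f2 a b (by omega) hab h; omega) (by omega)
    · intro a b hb hab h
      dsimp only
      rw [if_neg (show ¬ c a = m + 1 by omega)]
      by_cases hm : c b = m + 1
      · rw [if_pos hm]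
        have := Nat.mul_le_mul_left (n + 1) (G2 a b hm hab h)
        have := b.isLt
        rw [Nat.mul_add]
        omega
      · rw [if_neg hm]
        exact Nat.mul_lt_mul_of_pos_left (by have := f3 a b (by omega) hab h; omega) (by omega)

theorem exists_rank (F : Fin n → ℕ) : ∃ f : Fin n → ℕ, (∀ x, f x < n) ∧
    ∀ a b, F a < F b → f a < f b := by
  classical
  refine ⟨fun x => (Finset.univ.filter (fun y => F y < F x)).card, ?_, ?_⟩
  · intro x
    have : (Finset.univ.filter (fun y => F y < F x)).card <
        (Finset.univ : Finset (Fin n)).card := by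
      apply Finset.card_lt_card
      rw [Finset.ssubset_iff_of_subset (Finset.subset_univ _)]
      exact ⟨x, by simp, by simp⟩
    simpa using this
  · intro a b h
    apply Finset.card_lt_card
    rw [Finset.ssubset_iff_of_subset]
    · exact ⟨a, by simp [h], by simp⟩
    · intro z
      simp only [Finset.mem_filter, Finset.mem_univ, true_and]
      exact fun h' => h'.trans h

end cells

theorem exists_sorting {α β : Type} [Fintype α] [LinearOrder β] (N : ℕ)
    (hN : Fintype.card α = N) (key : α → β) (hk : Function.Injective key) :
    ∃ e : Fin N ≃ α, ∀ i j, key (e i) < key (e j) ↔ i < j := by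
  classical
  let _ : LinearOrder α := LinearOrder.lift' key hk
  let e := monoEquivOfFin α hN
  exact ⟨e.toEquiv, fun i j => e.lt_iff_lt⟩

def posKey {n : ℕ} (p : Fin n × Fin n) : ℕ ×ₗ (ℕ ×ₗ ℕ) :=
  toLex ((p.1.val + 1) / 2, toLex (p.2.val, p.1.val % 2))

def valKey {n : ℕ} (p : Fin n × Fin n) : ℕ ×ₗ (ℕ ×ₗ ℕ) :=
  toLex (p.1.val / 2, toLex (p.2.val, p.1.val % 2))

theorem posKey_lt {n : ℕ} (p q : Fin n × Fin n) : posKey p < posKey q ↔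
    (p.1.val + 1) / 2 < (q.1.val + 1) / 2 ∨ (p.1.val + 1) / 2 = (q.1.val + 1) / 2 ∧
    (p.2.val < q.2.val ∨ p.2.val = q.2.val ∧ p.1.val % 2 < q.1.val % 2) := by
  simp [posKey, Prod.Lex.toLex_lt_toLex]

theorem valKey_lt {n : ℕ} (p q : Fin n × Fin n) : valKey p < valKey q ↔
    p.1.val / 2 < q.1.val / 2 ∨ p.1.val / 2 = q.1.val / 2 ∧
    (p.2.val < q.2.val ∨ p.2.val = q.2.val ∧ p.1.val % 2 < q.1.val % 2) := by
  simp [valKey, Prod.Lex.toLex_lt_toLex]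

theorem posKey_inj {n : ℕ} : Function.Injective (posKey (n := n)) := by
  rintro p q h
  simp only [posKey, EmbeddingLike.apply_eq_iff_eq, Prod.mk.injEq] at h
  obtain ⟨h1, h2, h3⟩ := h
  exact Prod.ext (Fin.ext (by omega)) (Fin.ext (by omega))

theorem valKey_inj {n : ℕ} : Function.Injective (valKey (n := n)) := by
  rintro p q h
  simp only [valKey, EmbeddingLike.apply_eq_iff_eq, Prod.mk.injEq] at h
  obtain ⟨h1, h2, h3⟩ := h
  exact Prod.ext (Fin.ext (by omega)) (Fin.ext (by omega))

theorem exists_coords {n : ℕ} (π : Equiv.Perm (Fin n)) (hπ : Avoids321 π) :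
    ∃ g : Fin n → Fin n × Fin n, (∀ a b, a < b → posKey (g a) < posKey (g b)) ∧
      ∀ a b, π a < π b → valKey (g a) < valKey (g b) := by
  obtain ⟨c, c0, c1, c2, c3, c4⟩ := exists_cells hπ
  obtain ⟨F, F1, F2, F3⟩ := exists_frac (π := π) c c1 n
  obtain ⟨f, f0, ff⟩ := exists_rank F
  have inj : ∀ a b, c a = c b → π a < π b → a < b := by
    intro a b h h'
    by_contra hc
    rcases (not_lt.1 hc).lt_or_eq with h2 | h2
    · exact absurd (c1 _ _ h.symm h2) h'.not_gt
    · subst h2; exact absurd h' (lt_irrefl _)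
  have k1 : ∀ a b, c a = c b → a < b → f a < f b := fun a b h h' =>
    ff _ _ (F1 a b (c0 a).le h h')
  have k2 : ∀ a b, c b = c a + 1 → a < b → π a < π b → f a < f b := fun a b h h' h'' =>
    ff _ _ (F2 a b (c0 b).le h ⟨h', h''⟩)
  have k3 : ∀ a b, c b = c a + 1 → ¬ (a < b ∧ π a < π b) → f b < f a := fun a b h h' =>
    ff _ _ (F3 a b (c0 b).le h h')
  refine ⟨fun a => (⟨c a, c0 a⟩, ⟨f a, f0 a⟩), ?_, ?_⟩
  · intro a b h
    rw [posKey_lt]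
    dsimp only
    have e1 := k1 a b
    have e2 := c2 b a
    have e3 := c3 b a
    have e4 := c4 a b
    have e5 := k2 a b
    have e6 := k3 b a
    have hn := h.not_gt
    simp only [h, hn, false_and, not_false_eq_true, true_imp_iff, imp_false] at *
    rcases Nat.mod_two_eq_zero_or_one (c a) with hp | hp
    · omega
    · by_cases hab : c b = c a + 1
      · have := e5 hab (e4 hab hp)
        omega
      · omega
  · intro a b h
    rw [valKey_lt]
    dsimp only
    have e1 := k1 a b
    have e0 := inj a b
    have e2 := c2 b a
    have e3 := c4 b a
    have e4 := c3 a b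
    have e5 := k2 a b
    have e6 := k3 b a
    have hn := h.not_gt
    simp only [h, hn, and_false, not_false_eq_true, true_imp_iff, imp_false] at *
    by_cases hc : c a = c b
    · have := e1 hc (e0 hc)
      omega
    rcases Nat.mod_two_eq_zero_or_one (c a) with hp | hp
    · by_cases hab : c b = c a + 1
      · have := e5 hab (e4 hab hp)
        omega
      · omega
    · omega

/-- For every positive `n` there is a 321-avoiding permutation of length `n²` containing
every 321-avoiding permutation of length `n` as a pattern. -/
theorem exists_proper_universal_321_avoiding_permutation (n : ℕ) (hn : 0 < n) :
    ∃ ρ : Equiv.Perm (Fin (n ^ 2)), Avoids321 ρ ∧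
      ∀ π : Equiv.Perm (Fin n), Avoids321 π → HasPattern ρ π := by
  have hcard : Fintype.card (Fin n × Fin n) = n ^ 2 := by simp [sq]
  obtain ⟨e₁, h₁⟩ := exists_sorting (n ^ 2) hcard posKey posKey_inj
  obtain ⟨e₂, h₂⟩ := exists_sorting (n ^ 2) hcard valKey valKey_inj
  have hρ : ∀ i j, (e₁.trans e₂.symm) i < (e₁.trans e₂.symm) j ↔
      valKey (e₁ i) < valKey (e₁ j) := by
    intro i j
    rw [← h₂]
    simp
  refine ⟨e₁.trans e₂.symm, ?_, ?_⟩
  · rintro ⟨i, j, k, hij, hjk, h1, h2⟩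
    rw [hρ, valKey_lt] at h1 h2
    rw [← h₁, posKey_lt] at hij hjk
    omega
  · intro π hπ
    obtain ⟨g, g1, g2⟩ := exists_coords π hπ
    refine ⟨fun a => e₁.symm (g a), ?_, ?_⟩
    · intro a b h
      rw [← h₁]
      simpa using g1 a b h
    · intro a b
      rw [hρ]
      simp only [Equiv.apply_symm_apply]
      refine ⟨g2 a b, fun h => ?_⟩
      by_contra hc
      rcases (not_lt.1 hc).lt_or_eq with h2 | h2
      · exact absurd (g2 _ _ h2) h.not_gt
      · have := π.injective h2
        subst this; exact absurd h (lt_irrefl _)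
end

section
/- For every positive integer n there exists a split permutation graph U with exactly 4n³ vertices such that every split permutation graph with n vertices is isomorphic to an induced subgraph of U. -/
/-- `S` is an independent set in `G`. -/
def IndepSet {V : Type*} (G : SimpleGraph V) (S : Set V) : Prop :=
  ∀ ⦃x⦄, x ∈ S → ∀ ⦃y⦄, y ∈ S → ¬ G.Adj x y

/-- The vicinal quasi-order: `x ⊑ y` iff `N(x) ⊆ N(y) ∪ {y}`. -/
def VicinalLE {V : Type*} (G : SimpleGraph V) (x y : V) : Prop :=
  G.neighborSet x ⊆ G.neighborSet y ∪ {y}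

/-- A set of vertices is a vicinal chain if its elements are pairwise comparable in
the vicinal quasi-order. -/
def VicinalChain {V : Type*} (G : SimpleGraph V) (S : Set V) : Prop :=
  ∀ ⦃x⦄, x ∈ S → ∀ ⦃y⦄, y ∈ S → VicinalLE G x y ∨ VicinalLE G y x

/-- A graph is threshold if its whole vertex set is a vicinal chain. -/
def IsThresholdGraph {V : Type*} (G : SimpleGraph V) : Prop :=
  VicinalChain G Set.univ

/-- A split permutation graph: a split graph with clique `C` and independent set `I`
such that `C` splits into `C¹, C²` with `G[C¹ ∪ I]`, `G[C² ∪ I]` threshold, and `I`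
splits into `I¹, I²` with `G[C ∪ I¹]`, `G[C ∪ I²]` threshold. -/
def IsSplitPermGraph {V : Type*} (G : SimpleGraph V) : Prop :=
  ∃ C I C1 C2 I1 I2 : Set V,
    C ∪ I = Set.univ ∧ Disjoint C I ∧
    G.IsClique C ∧ IndepSet G I ∧
    C1 ∪ C2 = C ∧ Disjoint C1 C2 ∧
    I1 ∪ I2 = I ∧ Disjoint I1 I2 ∧
    IsThresholdGraph (G.induce (C1 ∪ I)) ∧ IsThresholdGraph (G.induce (C2 ∪ I)) ∧
    IsThresholdGraph (G.induce (C ∪ I1)) ∧ IsThresholdGraph (G.induce (C ∪ I2))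

namespace SPG

section walk
variable {V : Type} (τ : V → Fin 4) (R : V → V → Prop)

def s (a b : Fin 4) : ℤ := if a = 0 ∧ b = 3 then 1 else if a = 3 ∧ b = 0 then -1 else 0

inductive Wk : V → V → ℤ → Prop
  | single {x y} : R x y → Wk x y (s (τ x) (τ y))
  | tail {x y z S} : Wk x y S → R y z → Wk x z (S + s (τ y) (τ z))

def Up : ℕ → V → V → Prop
  | 0, x, y => τ x = τ y ∧ R x y
  | k+1, x, y => ∃ z, (Up k x z ∨ (k = 0 ∧ x = z)) ∧ τ y = τ z + 1 ∧ R z y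

def Dn : ℕ → V → V → Prop
  | 0, x, y => τ x = τ y ∧ R x y
  | k+1, x, y => ∃ z, (Dn k x z ∨ (k = 0 ∧ x = z)) ∧ τ z = τ y + 1 ∧ R z y

structure Good : Prop where
  irr : ∀ x, ¬ R x x
  near : ∀ x y, R x y → τ x = τ y ∨ τ y = τ x + 1 ∨ τ x = τ y + 1
  tr : ∀ x y z t, (τ x = t ∨ τ x = t + 1) → (τ y = t ∨ τ y = t + 1) → (τ z = t ∨ τ z = t + 1) →
    R x y → R y z → R x z
  tot : ∀ x y, τ x = τ y → x ≠ y → R x y ∨ R y x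
  neg : ∀ a b c d, τ a = τ b + 1 → τ b = τ c + 1 → τ c = τ d + 1 → R a b → R b c → R c d → ¬ R d a

variable {τ R}

lemma up_same (h : Good τ R) {k x y z} (hu : Up τ R k x y) (e : τ y = τ z) (r : R y z) :
    Up τ R k x z := by
  cases k with
  | zero =>
    obtain ⟨h1, h2⟩ := hu
    exact ⟨h1.trans e, h.tr x y z (τ x) (Or.inl rfl) (Or.inl h1.symm) (Or.inl (h1.trans e).symm) h2 r⟩
  | succ k =>
    obtain ⟨v, h1, h2, h3⟩ := hu
    exact ⟨v, h1, e ▸ h2, h.tr v y z (τ v) (Or.inl rfl) (Or.inr h2) (Or.inr (e ▸ h2)) h3 r⟩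

lemma dn_same (h : Good τ R) {k x y z} (hu : Dn τ R k x y) (e : τ y = τ z) (r : R y z) :
    Dn τ R k x z := by
  cases k with
  | zero =>
    obtain ⟨h1, h2⟩ := hu
    exact ⟨h1.trans e, h.tr x y z (τ x) (Or.inl rfl) (Or.inl h1.symm) (Or.inl (h1.trans e).symm) h2 r⟩
  | succ k =>
    obtain ⟨v, h1, h2, h3⟩ := hu
    exact ⟨v, h1, e ▸ h2, h.tr v y z (τ y) (Or.inr h2) (Or.inl rfl) (Or.inl e.symm) h3 r⟩

lemma up_dn (h : Good τ R) {k x y z} (hu : Up τ R (k+1) x y) (e : τ y = τ z + 1) (r : R y z) :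
    Up τ R k x z := by
  obtain ⟨v, h1, h2, h3⟩ := hu
  have hvz : τ v = τ z := by rw [h2] at e; exact add_right_cancel e
  have hr : R v z := h.tr v y z (τ v) (Or.inl rfl) (Or.inr h2) (Or.inl hvz.symm) h3 r
  rcases h1 with h1 | ⟨rfl, rfl⟩
  · exact up_same h h1 hvz hr
  · exact ⟨hvz, hr⟩

lemma dn_up (h : Good τ R) {k x y z} (hu : Dn τ R (k+1) x y) (e : τ z = τ y + 1) (r : R y z) :
    Dn τ R k x z := by
  obtain ⟨v, h1, h2, h3⟩ := hu
  have hvz : τ v = τ z := by rw [e, h2]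
  have hr : R v z := h.tr v y z (τ y) (Or.inr h2) (Or.inl rfl) (Or.inr e) h3 r
  rcases h1 with h1 | ⟨rfl, rfl⟩
  · exact dn_same h h1 hvz hr
  · exact ⟨hvz, hr⟩

lemma s_same (a : Fin 4) : s a a = 0 := by revert a; decide
lemma s_up (a : Fin 4) : ((a + 1 : Fin 4).val : ℤ) - a.val = 1 + 4 * s a (a+1) := by
  revert a; decide
lemma s_dn (a : Fin 4) : (a.val : ℤ) - (a + 1 : Fin 4).val = - 1 + 4 * s (a+1) a := by
  revert a; decide

def M (τ : V → Fin 4) (R : V → V → Prop) (x y : V) (d : ℤ) : Prop :=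
  (∃ k : ℕ, d = k ∧ Up τ R k x y) ∨ (∃ k : ℕ, d = -k ∧ Dn τ R k x y)

lemma wk_M (h : Good τ R) {x y S} (hw : Wk τ R x y S) :
    M τ R x y (((τ y).val : ℤ) - (τ x).val - 4 * S) := by
  induction hw with
  | @single y r =>
    rcases h.near x y r with e | e | e
    · left; refine ⟨0, ?_, e, r⟩
      rw [e, s_same]; simp
    · left; refine ⟨1, ?_, x, Or.inr ⟨rfl, rfl⟩, e, r⟩
      have := s_up (τ x); rw [e]; push_cast; linarith
    · right; refine ⟨1, ?_, x, Or.inr ⟨rfl, rfl⟩, e, r⟩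
      have := s_dn (τ y); rw [e]; push_cast; linarith
  | @tail y z S hw r ih =>
    rcases h.near y z r with e | e | e
    · rw [← e, s_same, add_zero]
      rcases ih with ⟨k, hk, hu⟩ | ⟨k, hk, hu⟩
      · exact Or.inl ⟨k, hk, up_same h hu e r⟩
      · exact Or.inr ⟨k, hk, dn_same h hu e r⟩
    · have := s_up (τ y)
      rw [← e] at this
      rcases ih with ⟨k, hk, hu⟩ | ⟨k, hk, hu⟩
      · exact Or.inl ⟨k+1, by push_cast; linarith, y, Or.inl hu, e, r⟩
      · cases k with
        | zero => exact Or.inl ⟨1, by push_cast at *; linarith, y, Or.inl hu, e, r⟩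
        | succ k => exact Or.inr ⟨k, by push_cast at *; linarith, dn_up h hu e r⟩
    · have := s_dn (τ z)
      rw [← e] at this
      rcases ih with ⟨k, hk, hu⟩ | ⟨k, hk, hu⟩
      · cases k with
        | zero => exact Or.inr ⟨1, by push_cast at *; linarith, y, Or.inl hu, e, r⟩
        | succ k => exact Or.inl ⟨k, by push_cast at *; linarith, up_dn h hu e r⟩
      · exact Or.inr ⟨k+1, by push_cast; linarith, y, Or.inl hu, e, r⟩

lemma four (t : Fin 4) : t + 1 + 1 + 1 + 1 = t := by revert t; decide

lemma dn4 (h : Good τ R) (k : ℕ) {x y} (hu : Dn τ R (k+4) x y) :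
    Dn τ R k x y := by
  obtain ⟨a, ha, ea, ra⟩ := hu
  rcases ha with ha | ⟨h0, _⟩
  swap
  · omega
  obtain ⟨b, hb, eb, rb⟩ := ha
  rcases hb with hb | ⟨h0, _⟩
  swap
  · omega
  obtain ⟨c, hc, ec, rc⟩ := hb
  rcases hc with hc | ⟨h0, _⟩
  swap
  · omega
  obtain ⟨d, hd, ed, rd⟩ := hc
  -- d < c < b < a < y
  have hdy : τ d = τ y := by rw [ed, ec, eb, ea, four]
  have hn := h.neg d c b a ed ec eb rd rc rb
  have hr : R d y := by
    by_contra hcon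
    by_cases hxy : d = y
    · subst hxy; exact hn ra
    · rcases h.tot d y hdy hxy with h1 | h1
      · exact hcon h1
      · exact hn (h.tr a y d (τ y) (Or.inr ea) (Or.inl rfl) (Or.inl hdy) ra h1)
  rcases hd with hd | ⟨rfl, rfl⟩
  · exact dn_same h hd hdy hr
  · exact ⟨hdy, hr⟩

lemma dn4k (h : Good τ R) (k : ℕ) {x y} (hu : Dn τ R (4 * k) x y) : Dn τ R 0 x y := by
  induction k with
  | zero => exact hu
  | succ k ih => exact ih (dn4 h _ hu)

lemma closed (h : Good τ R) {x S} (hw : Wk τ R x x S) : S < 0 := by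
  by_contra hS
  rcases wk_M h hw with ⟨k, hk, hu⟩ | ⟨k, hk, hu⟩
  · have : k = 0 := by omega
    subst this
    exact h.irr x hu.2
  · obtain ⟨m, rfl⟩ : ∃ m, k = 4 * m := ⟨S.toNat, by omega⟩
    exact h.irr x (dn4k h m hu).2

open Classical in
inductive Pth (τ : V → Fin 4) (R : V → V → Prop) : V → Finset V → ℤ → Prop
  | nil (x) : Pth τ R x {x} 0
  | cons {x y A S} : Pth τ R x A S → R x y → y ∉ A → Pth τ R y (insert y A) (S + s (τ x) (τ y))

lemma pth_card {x A S} (h : Pth τ R x A S) : 1 ≤ A.card ∧ S ≤ A.card - 1 := by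
  classical
  induction h with
  | nil x => simp
  | @cons x y A S h r hy ih =>
    rw [Finset.card_insert_of_notMem hy]
    have : s (τ x) (τ y) ≤ 1 := by unfold s; split_ifs <;> simp
    refine ⟨by omega, ?_⟩
    push_cast
    linarith [ih.2]

lemma pth_split {x A S} (h : Pth τ R x A S) (y) (hy : y ∈ A) :
    y = x ∨ ∃ A1 S1 S2, Pth τ R y A1 S1 ∧ Wk τ R y x S2 ∧ S = S1 + S2 := by
  classical
  induction h with
  | nil x => left; simpa using hy
  | @cons x z A S h r hz ih =>
    rcases Finset.mem_insert.1 hy with rfl | hy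
    · exact Or.inl rfl
    · right
      rcases ih hy with rfl | ⟨A1, S1, S2, h1, h2, rfl⟩
      · exact ⟨A, S, _, h, Wk.single r, rfl⟩
      · exact ⟨A1, S1, _, h1, Wk.tail h2 r, by ring⟩

lemma potential [Fintype V] (h : Good τ R) (n : ℕ) (hn : Fintype.card V = n) :
    ∃ f : V → ℕ, (∀ x, f x < n ^ 3) ∧
      ∀ x y, R x y → (f x : ℤ) + n * s (τ x) (τ y) < f y := by
  classical
  have hA : ∀ A : Finset V, A.card ≤ n := fun A => hn ▸ A.card_le_univ
  have key : ∀ x, ∃ m : ℤ, (∃ A S, Pth τ R x A S ∧ m = A.card - 1 + n * S) ∧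
      ∀ m', (∃ A S, Pth τ R x A S ∧ m' = A.card - 1 + n * S) → m' ≤ m := by
    intro x
    apply Int.exists_greatest_of_bdd
    · refine ⟨n + n * n, ?_⟩
      rintro z ⟨A, S, hp, rfl⟩
      have h1 := pth_card hp
      have h2 := hA A
      have : (n : ℤ) * S ≤ n * n := by
        apply mul_le_mul_of_nonneg_left <;> omega
      omega
    · exact ⟨_, _, _, Pth.nil x, rfl⟩
  choose f hf1 hf2 using key
  have hpos : ∀ x, 0 ≤ f x := fun x => hf2 x 0 ⟨_, _, Pth.nil x, by simp⟩
  refine ⟨fun x => (f x).toNat, ?_, ?_⟩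
  · intro x
    obtain ⟨A, S, hp, hm⟩ := hf1 x
    have h1 := pth_card hp
    have h2 := hA A
    have h3 : (n : ℤ) * S ≤ n * (n - 1) := by
      apply mul_le_mul_of_nonneg_left <;> omega
    have h4 : f x < n ^ 2 := by nlinarith
    have h5 : (n:ℤ) ^ 2 ≤ n ^ 3 := pow_le_pow_right₀ (by omega) (by norm_num)
    have h6 : f x < ((n ^ 3 : ℕ) : ℤ) := by push_cast; linarith
    have := hpos x
    show (f x).toNat < n ^ 3
    omega
  · intro x y r
    have hx := hpos x
    have hy := hpos y
    simp only [Int.toNat_of_nonneg hx, Int.toNat_of_nonneg hy]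
    obtain ⟨A, S, hp, hm⟩ := hf1 x
    by_cases hyA : y ∈ A
    · rcases pth_split hp y hyA with rfl | ⟨A1, S1, S2, h1, h2, rfl⟩
      · exact absurd r (h.irr _)
      · have h3 := closed h (h2.tail r)
        have h4 := hf2 y _ ⟨_, _, h1, rfl⟩
        have h5 := hA A
        have h6 := pth_card h1
        have h7 : (n : ℤ) * (S2 + s (τ x) (τ y)) ≤ n * (-1) := by
          apply mul_le_mul_of_nonneg_left <;> omega
        have h8 : (A.card : ℤ) ≤ n := by exact_mod_cast h5
        have h9 : (1 : ℤ) ≤ A1.card := by exact_mod_cast h6.1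
        linarith
    · have h4 := hf2 y _ ⟨_, _, Pth.cons hp r hyA, rfl⟩
      rw [Finset.card_insert_of_notMem hyA] at h4
      push_cast at h4
      linarith

end walk

section univ
variable {V : Type} (t : V → Fin 4) (p : V → ℕ) (T : ℕ)

def isC (a : Fin 4) : Prop := a = 0 ∨ a = 2

def off (a b : Fin 4) : ℕ := if a = 0 ∧ b = 3 then T else 0

def UG : SimpleGraph V where
  Adj x y := x ≠ y ∧ ((isC (t x) ∧ isC (t y)) ∨
    (isC (t x) ∧ ¬ isC (t y) ∧ p y < p x + off T (t x) (t y)) ∨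
    (isC (t y) ∧ ¬ isC (t x) ∧ p x < p y + off T (t y) (t x)))
  symm := ⟨by intro x y; grind⟩
  loopless := ⟨by intro x; grind⟩

lemma fin4 (a : Fin 4) : a = 0 ∨ a = 1 ∨ a = 2 ∨ a = 3 := by revert a; decide

/-- generic threshold criterion -/
lemma thr {V : Type} {G : SimpleGraph V} {C I : Set V} (hC : G.IsClique C) (hI : IndepSet G I)
    (A : Set V) (hA : A ⊆ C ∪ I)
    (h1 : ∀ x ∈ A, ∀ y ∈ A, x ∈ C → y ∈ C →
      (∀ i ∈ A, i ∈ I → G.Adj x i → G.Adj y i) ∨ (∀ i ∈ A, i ∈ I → G.Adj y i → G.Adj x i))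
    (h2 : ∀ x ∈ A, ∀ y ∈ A, x ∈ I → y ∈ I →
      (∀ i ∈ A, i ∈ C → G.Adj x i → G.Adj y i) ∨ (∀ i ∈ A, i ∈ C → G.Adj y i → G.Adj x i)) :
    IsThresholdGraph (G.induce A) := by
  have aux : ∀ x y : V, x ∈ C → y ∈ C → (∀ i ∈ A, i ∈ I → G.Adj x i → G.Adj y i) →
      ∀ z ∈ A, G.Adj x z → G.Adj y z ∨ z = y := by
    intro x y hx hy h z hz hxz
    rcases hA hz with hz' | hz'
    · by_cases e : z = y
      · exact Or.inr e
      · exact Or.inl (hC hy hz' (Ne.symm e))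
    · exact Or.inl (h z hz hz' hxz)
  have aux2 : ∀ x y : V, x ∈ I → y ∈ I → (∀ i ∈ A, i ∈ C → G.Adj x i → G.Adj y i) →
      ∀ z ∈ A, G.Adj x z → G.Adj y z ∨ z = y := by
    intro x y hx hy h z hz hxz
    rcases hA hz with hz' | hz'
    · exact Or.inl (h z hz hz' hxz)
    · exact absurd hxz (hI hx hz')
  have aux3 : ∀ x y : V, x ∈ I → y ∈ C → ∀ z ∈ A, G.Adj x z → G.Adj y z ∨ z = y := by
    intro x y hx hy z hz hxz
    rcases hA hz with hz' | hz'
    · by_cases e : z = y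
      · exact Or.inr e
      · exact Or.inl (hC hy hz' (Ne.symm e))
    · exact absurd hxz (hI hx hz')
  have conv : ∀ x y : A, (∀ z ∈ A, G.Adj x z → G.Adj y z ∨ z = y) →
      VicinalLE (G.induce A) x y := by
    intro x y h z hz
    rcases h z z.2 hz with h | h
    · exact Or.inl h
    · exact Or.inr (Subtype.ext h)
  rintro ⟨x, hx⟩ - ⟨y, hy⟩ -
  rcases hA hx with hx' | hx' <;> rcases hA hy with hy' | hy'
  · rcases h1 x hx y hy hx' hy' with h | h
    · exact Or.inl (conv _ _ (aux x y hx' hy' h))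
    · exact Or.inr (conv _ _ (aux y x hy' hx' h))
  · exact Or.inr (conv _ _ (aux3 y x hy' hx'))
  · exact Or.inl (conv _ _ (aux3 x y hx' hy'))
  · rcases h2 x hx y hy hx' hy' with h | h
    · exact Or.inl (conv _ _ (aux2 x y hx' hy' h))
    · exact Or.inr (conv _ _ (aux2 y x hy' hx' h))

lemma UG_adj {t : V → Fin 4} {p : V → ℕ} {T : ℕ} {x y : V} (hx : isC (t x)) (hy : ¬ isC (t y)) :
    (UG t p T).Adj x y ↔ p y < p x + off T (t x) (t y) := by
  have : x ≠ y := by rintro rfl; exact hy hx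
  simp [UG, hx, hy, this]

lemma UG_split : IsSplitPermGraph (UG t p T) := by
  have hCl : (UG t p T).IsClique {x | isC (t x)} := by
    intro x hx y hy hxy
    exact ⟨hxy, Or.inl ⟨hx, hy⟩⟩
  have hIn : IndepSet (UG t p T) {x | ¬ isC (t x)} := by
    intro x hx y hy h
    simp only [UG, Set.mem_setOf_eq] at *
    tauto
  have c0 : isC 0 := Or.inl rfl
  have c2 : isC 2 := Or.inr rfl
  have c1 : ¬ isC 1 := by unfold isC; decide
  have c3 : ¬ isC 3 := by unfold isC; decide
  have mC : ∀ x y : V, isC (t x) → isC (t y) → ((t x = t y) ∨ True) := by tauto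
  -- monotone in C within the same type
  have monC : ∀ x y : V, isC (t x) → t x = t y → p x ≤ p y → ∀ i, ¬ isC (t i) →
      (UG t p T).Adj x i → (UG t p T).Adj y i := by
    intro x y hx e hp i hi
    rw [UG_adj hx hi, UG_adj (e ▸ hx) hi, e]
    omega
  have monI : ∀ x y : V, ¬ isC (t x) → t x = t y → p y ≤ p x → ∀ i, isC (t i) →
      (UG t p T).Adj x i → (UG t p T).Adj y i := by
    intro x y hx e hp i hi
    rw [(UG t p T).adj_comm, (UG t p T).adj_comm y, UG_adj hi hx, UG_adj hi (e ▸ hx), e]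
    omega
  -- across, restricted to one type on other side
  have thrC : ∀ a : Fin 4, isC a → IsThresholdGraph
      ((UG t p T).induce ({x | t x = a} ∪ {x | ¬ isC (t x)})) := by
    intro a ha
    apply thr hCl hIn
    · intro x _; exact em _
    · intro x hx y hy hx' hy'
      have ex : t x = a := by rcases hx with h | h; exacts [h, absurd hx' h]
      have ey : t y = a := by rcases hy with h | h; exacts [h, absurd hy' h]
      rcases le_total (p x) (p y) with h | h
      · exact Or.inl fun i _ hi => monC x y hx' (ex.trans ey.symm) h i hi
      · exact Or.inr fun i _ hi => monC y x hy' (ey.trans ex.symm) h i hi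
    · intro x hx y hy hx' hy'
      have hi : ∀ i ∈ ({x | t x = a} ∪ {x | ¬ isC (t x)} : Set V), i ∈ {x | isC (t x)} → t i = a := by
        intro i hi hi'
        rcases hi with h | h; exacts [h, absurd hi' h]
      rcases le_total ((p x : ℤ) - off T a (t x)) ((p y : ℤ) - off T a (t y)) with h | h
      · right
        intro i h1 h2
        rw [(UG t p T).adj_comm, (UG t p T).adj_comm x, UG_adj h2 hx', UG_adj h2 hy', hi i h1 h2]
        omega
      · left
        intro i h1 h2
        rw [(UG t p T).adj_comm, (UG t p T).adj_comm y, UG_adj h2 hx', UG_adj h2 hy', hi i h1 h2]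
        omega
  have thrI : ∀ a : Fin 4, ¬ isC a → IsThresholdGraph
      ((UG t p T).induce ({x | isC (t x)} ∪ {x | t x = a})) := by
    intro a ha
    have hi : ∀ i ∈ ({x | isC (t x)} ∪ {x | t x = a} : Set V), i ∈ {x | ¬ isC (t x)} → t i = a := by
      intro i hi hi'
      rcases hi with h | h; exacts [absurd h hi', h]
    apply thr hCl hIn
    · intro x _; exact em _
    · intro x hx y hy hx' hy'
      rcases le_total (p x + off T (t x) a) (p y + off T (t y) a) with h | h
      · left
        intro i h1 h2
        rw [UG_adj hx' h2, UG_adj hy' h2, hi i h1 h2]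
        omega
      · right
        intro i h1 h2
        rw [UG_adj hx' h2, UG_adj hy' h2, hi i h1 h2]
        omega
    · intro x hx y hy hx' hy'
      have ex := hi x hx hx'
      have ey := hi y hy hy'
      rcases le_total (p x) (p y) with h | h
      · exact Or.inr fun i _ hi => monI y x hy' (ey.trans ex.symm) h i hi
      · exact Or.inl fun i _ hi => monI x y hx' (ex.trans ey.symm) h i hi
  refine ⟨{x | isC (t x)}, {x | ¬ isC (t x)}, {x | t x = 0}, {x | t x = 2}, {x | t x = 1},
    {x | t x = 3}, ?_, ?_, hCl, hIn, ?_, ?_, ?_, ?_, thrC 0 c0, thrC 2 c2, thrI 1 c1, thrI 3 c3⟩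
  · ext x; simp [em]
  · rw [Set.disjoint_left]; intro x h1 h2; exact h2 h1
  · rfl
  · rw [Set.disjoint_left]; intro x h1 h2; simp_all
  · ext x; rcases fin4 (t x) with h | h | h | h <;> simp [h, c0, c1, c2, c3]
  · rw [Set.disjoint_left]; intro x h1 h2; simp_all

end univ

section emb

lemma thr_out {V : Type} {G : SimpleGraph V} (A : Set V) (h : IsThresholdGraph (G.induce A))
    {x y i j : V} (hx : x ∈ A) (hy : y ∈ A) (hi : i ∈ A) (hj : j ∈ A)
    (h1 : G.Adj x i) (h2 : ¬ G.Adj y i) (h3 : G.Adj y j) (h4 : ¬ G.Adj x j) (hiy : i ≠ y)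
    (hjx : j ≠ x) : False := by
  rcases h (x := ⟨x, hx⟩) trivial (y := ⟨y, hy⟩) trivial with h | h
  · rcases h (show (⟨i, hi⟩ : A) ∈ _ from h1) with h | h
    · exact h2 h
    · exact hiy (congrArg Subtype.val h)
  · rcases h (show (⟨j, hj⟩ : A) ∈ _ from h3) with h | h
    · exact h4 h
    · exact hjx (congrArg Subtype.val h)

set_option maxHeartbeats 1600000 in
/-- The combinatorial core: a typing and a good relation. -/
lemma exists_good {W : Type} [Fintype W] (H : SimpleGraph W) (hH : IsSplitPermGraph H) :
    ∃ (τ : W → Fin 4) (R : W → W → Prop), Good τ R ∧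
      (∀ x y, x ≠ y → isC (τ x) → isC (τ y) → H.Adj x y) ∧
      (∀ x y, ¬ isC (τ x) → ¬ isC (τ y) → ¬ H.Adj x y) ∧
      (∀ x y, isC (τ x) → ¬ isC (τ y) → H.Adj x y → R y x) ∧
      (∀ x y, isC (τ x) → ¬ isC (τ y) → ¬ H.Adj x y → R x y) := by
  classical
  obtain ⟨C, I, C1, C2, I1, I2, hCI, hdCI, hCl, hIn, hC12, hdC, hI12, hdI, t1, t2, t3, t4⟩ := hH
  have hI : ∀ x, x ∈ I ↔ x ∉ C := by
    intro x
    constructor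
    · intro h h'; exact Set.disjoint_left.1 hdCI h' h
    · intro h
      have : x ∈ C ∪ I := hCI ▸ trivial
      exact this.resolve_left h
  have hI1 : ∀ x, x ∈ I1 → x ∉ C := fun x h => (hI x).1 (hI12 ▸ Or.inl h)
  have hI2 : ∀ x, x ∈ I2 → x ∉ C := fun x h => (hI x).1 (hI12 ▸ Or.inr h)
  have hI12' : ∀ x, x ∉ C → x ∈ I1 ∨ x ∈ I2 := fun x h => by
    have := (hI x).2 h; rwa [← hI12] at this
  have hC12' : ∀ x, x ∈ C → x ∈ C1 ∨ x ∈ C2 := fun x h => by rwa [← hC12] at h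
  have ne : ∀ x y, x ∈ C → y ∉ C → x ≠ y := by rintro x y h1 h2 rfl; exact h2 h1
  have chI : ∀ i j c d, ((i ∈ I1 ∧ j ∈ I1) ∨ (i ∈ I2 ∧ j ∈ I2)) → c ∈ C → d ∈ C →
      H.Adj c i → ¬ H.Adj d i → H.Adj d j → H.Adj c j := by
    intro i j c d hij hc hd h1 h2 h3
    by_contra h4
    rcases hij with ⟨hi, hj⟩ | ⟨hi, hj⟩
    · exact thr_out _ t3 (Or.inl hc) (Or.inl hd) (Or.inr hi) (Or.inr hj) h1 h2 h3 h4
        (ne _ _ hd (hI1 _ hi)).symm (ne _ _ hc (hI1 _ hj)).symm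
    · exact thr_out _ t4 (Or.inl hc) (Or.inl hd) (Or.inr hi) (Or.inr hj) h1 h2 h3 h4
        (ne _ _ hd (hI2 _ hi)).symm (ne _ _ hc (hI2 _ hj)).symm
  have chC : ∀ i j c d, ((c ∈ C1 ∧ d ∈ C1) ∨ (c ∈ C2 ∧ d ∈ C2)) → i ∉ C → j ∉ C →
      H.Adj c i → ¬ H.Adj d i → H.Adj d j → H.Adj c j := by
    intro i j c d hij hi hj h1 h2 h3
    by_contra h4
    have hi' := (hI i).2 hi
    have hj' := (hI j).2 hj
    rcases hij with ⟨hc, hd⟩ | ⟨hc, hd⟩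
    · exact thr_out _ t1 (Or.inl hc) (Or.inl hd) (Or.inr hi') (Or.inr hj') h1 h2 h3 h4
        (ne _ _ (hC12 ▸ Or.inl hd) hi).symm (ne _ _ (hC12 ▸ Or.inl hc) hj).symm
    · exact thr_out _ t2 (Or.inl hc) (Or.inl hd) (Or.inr hi') (Or.inr hj') h1 h2 h3 h4
        (ne _ _ (hC12 ▸ Or.inr hd) hi).symm (ne _ _ (hC12 ▸ Or.inr hc) hj).symm
  clear t1 t2 t3 t4
  let NW : W → W → Prop := fun c d => c ∈ C ∧ d ∈ C ∧
    (∃ i ∈ I1, ¬ H.Adj c i ∧ H.Adj d i) ∧ (∃ j ∈ I2, H.Adj c j ∧ ¬ H.Adj d j)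
  have NWinc : ∀ c d, NW c d → ¬ ((c ∈ C1 ∧ d ∈ C1) ∨ (c ∈ C2 ∧ d ∈ C2)) := by
    rintro c d ⟨hc, hd, ⟨i, hi, h1, h2⟩, ⟨j, hj, h3, h4⟩⟩ h
    exact h1 (chC j i c d h (hI2 _ hj) (hI1 _ hi) h3 h4 h2)
  have NWtr : ∀ c d e, NW c d → NW d e → NW c e := by
    rintro c d e ⟨hc, hd, ⟨i, hi, h1, h2⟩, ⟨j, hj, h3, h4⟩⟩
      ⟨_, he, ⟨i', hi', h1', h2'⟩, ⟨j', hj', h3', h4'⟩⟩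
    refine ⟨hc, he, ⟨i, hi, h1, ?_⟩, ⟨j, hj, h3, ?_⟩⟩
    · exact chI i' i e d (Or.inl ⟨hi', hi⟩) he hd h2' h1' h2
    · intro h5
      exact h4 (chI j' j d e (Or.inr ⟨hj', hj⟩) hd he h3' h4' h5)
  have NW3 : ∀ c d e, NW c d → NW d e → False := by
    intro c d e h1 h2
    have h3 := NWtr c d e h1 h2
    have a1 := NWinc _ _ h1
    have a2 := NWinc _ _ h2
    have a3 := NWinc _ _ h3
    have b1 := hC12' c h1.1
    have b2 := hC12' d h1.2.1
    have b3 := hC12' e h2.2.1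
    clear h1 h2 h3
    rcases b1 with b1 | b1 <;> rcases b2 with b2 | b2 <;> rcases b3 with b3 | b3 <;>
      first
      | exact a1 (Or.inl ⟨b1, b2⟩)
      | exact a1 (Or.inr ⟨b1, b2⟩)
      | exact a2 (Or.inl ⟨b2, b3⟩)
      | exact a2 (Or.inr ⟨b2, b3⟩)
      | exact a3 (Or.inl ⟨b1, b3⟩)
      | exact a3 (Or.inr ⟨b1, b3⟩)
  have NWtot : ∀ c d i j, c ∈ C → d ∈ C → i ∉ C → j ∉ C → H.Adj c i → ¬ H.Adj d i →
      H.Adj d j → ¬ H.Adj c j → NW c d ∨ NW d c := by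
    intro c d i j hc hd hi hj h1 h2 h3 h4
    rcases hI12' i hi with hi' | hi' <;> rcases hI12' j hj with hj' | hj'
    · exact absurd (chI i j c d (Or.inl ⟨hi', hj'⟩) hc hd h1 h2 h3) h4
    · exact Or.inr ⟨hd, hc, ⟨i, hi', h2, h1⟩, ⟨j, hj', h3, h4⟩⟩
    · exact Or.inl ⟨hc, hd, ⟨j, hj', h4, h3⟩, ⟨i, hi', h1, h2⟩⟩
    · exact absurd (chI i j c d (Or.inr ⟨hi', hj'⟩) hc hd h1 h2 h3) h4
  let τ : W → Fin 4 := fun x => if x ∈ C then (if ∃ d, NW x d then 0 else 2)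
    else (if x ∈ I1 then 1 else 3)
  have c0 : isC 0 := Or.inl rfl
  have c2 : isC 2 := Or.inr rfl
  have c1 : ¬ isC 1 := by unfold isC; decide
  have c3 : ¬ isC 3 := by unfold isC; decide
  have hτC : ∀ x, isC (τ x) ↔ x ∈ C := by
    intro x
    by_cases h : x ∈ C <;> simp only [τ, h, if_true, if_false] <;> split_ifs <;> simp [*]
  have hτ0 : ∀ x, τ x = 0 → ∃ d, NW x d := by
    intro x hx
    simp only [τ] at hx
    split_ifs at hx <;> simp_all
  have hτ2 : ∀ x, τ x = 2 → ∀ d, ¬ NW x d := by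
    intro x hx
    simp only [τ] at hx
    split_ifs at hx <;> simp_all
  have hτ1 : ∀ x, τ x = 1 → x ∈ I1 := by
    intro x hx
    simp only [τ] at hx
    split_ifs at hx <;> simp_all
  have hτ3 : ∀ x, τ x = 3 → x ∈ I2 := by
    intro x hx
    have : x ∉ C := fun h => by have := (hτC x).2 h; rw [hx] at this; exact c3 this
    refine (hI12' x this).resolve_left fun h => ?_
    simp [τ, this, h] at hx
  -- cross relation
  let K : W → W → Prop := fun x y => (x ∉ C ∧ y ∈ C ∧ H.Adj x y) ∨ (x ∈ C ∧ y ∉ C ∧ ¬ H.Adj x y)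
  have Kci : ∀ x y, x ∈ C → y ∉ C → (K x y ↔ ¬ H.Adj x y) := by
    intro x y hx hy
    simp [K, hx, hy]
  have Kic : ∀ x y, x ∈ C → y ∉ C → (K y x ↔ H.Adj x y) := by
    intro x y hx hy
    simp [K, hx, hy, H.adj_comm]
  have Ktot : ∀ x y, (x ∈ C ↔ y ∉ C) → (K x y ↔ ¬ K y x) := by
    intro x y h
    by_cases hx : x ∈ C
    · rw [Kci _ _ hx (h.1 hx), Kic _ _ hx (h.1 hx)]
    · have hy : y ∈ C := by by_contra hy; exact hx (h.2 hy)
      rw [Kci _ _ hy hx, Kic _ _ hy hx, not_not]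
  have Kpar : ∀ x y, K x y → (x ∈ C ↔ y ∉ C) := by
    intro x y h
    rcases h with ⟨h1, h2, _⟩ | ⟨h1, h2, _⟩
    · simp [h1, h2]
    · simp [h1, h2]
  let P : W → W → Prop := fun x y => ∀ z, K z x → K z y
  have Ptot : ∀ x y, τ x = τ y → P x y ∨ P y x := by
    intro x y e
    by_contra hcon
    simp only [P, not_or, not_forall] at hcon
    obtain ⟨⟨z, h1, h2⟩, ⟨w, h3, h4⟩⟩ := hcon
    have hxy : x ∈ C ↔ y ∈ C := by rw [← hτC, ← hτC, e]
    have hz := Kpar _ _ h1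
    have hw := Kpar _ _ h3
    by_cases hx : x ∈ C
    · have hy := hxy.1 hx
      have hz' : z ∉ C := fun h => hz.1 h hx
      have hw' : w ∉ C := fun h => hw.1 h hy
      rw [Kic _ _ hx hz'] at h1
      rw [Kic _ _ hy hz'] at h2
      rw [Kic _ _ hy hw'] at h3
      rw [Kic _ _ hx hw'] at h4
      have hnw := NWtot x y z w hx hy hz' hw' h1 h2 h3 h4
      rcases fin4 (τ x) with hh | hh | hh | hh
      · obtain ⟨d, hd⟩ := hτ0 x hh
        obtain ⟨d', hd'⟩ := hτ0 y (e ▸ hh)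
        rcases hnw with h | h
        · exact NW3 _ _ _ h hd'
        · exact NW3 _ _ _ h hd
      · have := (hτC x).2 hx; rw [hh] at this; exact c1 this
      · rcases hnw with h | h
        · exact hτ2 x hh _ h
        · exact hτ2 y (e ▸ hh) _ h
      · have := (hτC x).2 hx; rw [hh] at this; exact c3 this
    · have hy : y ∉ C := mt hxy.2 hx
      have hz' : z ∈ C := hz.2 hx
      have hw' : w ∈ C := hw.2 hy
      rw [Kci _ _ hz' hx] at h1
      rw [Kci _ _ hz' hy, not_not] at h2
      rw [Kci _ _ hw' hy] at h3
      rw [Kci _ _ hw' hx, not_not] at h4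
      have h12 : (x ∈ I1 ∧ y ∈ I1) ∨ (x ∈ I2 ∧ y ∈ I2) := by
        rcases fin4 (τ x) with hh | hh | hh | hh
        · have := mt (hτC x).1 hx; rw [hh] at this; exact absurd c0 this
        · exact Or.inl ⟨hτ1 _ hh, hτ1 _ (e ▸ hh)⟩
        · have := mt (hτC x).1 hx; rw [hh] at this; exact absurd c2 this
        · exact Or.inr ⟨hτ3 _ hh, hτ3 _ (e ▸ hh)⟩
      exact h3 (chI x y w z h12 hw' hz' h4 h1 h2)
  let e := Fintype.equivFin W
  let R : W → W → Prop := fun x y => K x y ∨ (τ x = τ y ∧ P x y ∧ (P y x → e x < e y))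
  have sameC : ∀ x y, τ x = τ y → (x ∈ C ↔ y ∈ C) := fun x y h => by rw [← hτC, ← hτC, h]
  have Knτ : ∀ x y, K x y → τ x ≠ τ y := by
    intro x y h h'
    have h1 := (Kpar _ _ h).symm.trans (sameC _ _ h')
    by_cases hy : y ∈ C
    · exact h1.2 hy hy
    · exact hy (h1.1 hy)
  have par1 : ∀ a : Fin 4, isC (a + 1) ↔ ¬ isC a := by unfold isC; decide
  have par2 : ∀ a b : Fin 4, (isC a ↔ ¬ isC b) → b = a + 1 ∨ a = b + 1 := by unfold isC; decide
  have par3 : ∀ a c t : Fin 4, (a = t ∨ a = t+1) → (c = t ∨ c = t + 1) → (isC a ↔ isC c) → a = c := by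
    unfold isC; decide
  refine ⟨τ, R, ⟨?_, ?_, ?_, ?_, ?_⟩, ?_, ?_, ?_, ?_⟩
  · rintro x (h | ⟨_, h1, h2⟩)
    · exact Knτ _ _ h rfl
    · exact lt_irrefl _ (h2 h1)
  · rintro x y (h | ⟨h, _⟩)
    · right
      apply par2
      rw [hτC, hτC]; exact Kpar _ _ h
    · exact Or.inl h
  · rintro x y z t hx hy hz (h | ⟨h1, h2, h3⟩) (h' | ⟨h1', h2', h3'⟩)
    · have k1 := Kpar _ _ h
      have k2 := Kpar _ _ h'
      have exz : τ x = τ z := par3 _ _ t hx hz (by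
        rw [hτC, hτC]; exact (k1.trans (not_congr k2)).trans not_not)
      have hn : ¬ P z x := fun hp => (Ktot x y k1).1 h (hp y h')
      exact Or.inr ⟨exz, (Ptot x z exz).resolve_right hn, fun hp => absurd hp hn⟩
    · exact Or.inl (h2' x h)
    · left
      have k1 := Kpar _ _ h'
      have k2 := sameC _ _ h1
      rw [Ktot x z (k2.trans k1)]
      intro h5
      exact (Ktot y z k1).1 h' (h2 z h5)
    · refine Or.inr ⟨h1.trans h1', fun w hw => h2' w (h2 w hw), fun hp => ?_⟩
      have a1 : P y x := fun w hw => hp w (h2' w hw)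
      have a2 : P z y := fun w hw => h2 w (hp w hw)
      exact (h3 a1).trans (h3' a2)
  · intro x y exy hne
    have hne' : e x ≠ e y := fun h => hne (e.injective h)
    by_cases h1 : P x y
    · by_cases h2 : P y x
      · rcases lt_or_gt_of_ne hne' with h | h
        · exact Or.inl (Or.inr ⟨exy, h1, fun _ => h⟩)
        · exact Or.inr (Or.inr ⟨exy.symm, h2, fun _ => h⟩)
      · exact Or.inl (Or.inr ⟨exy, h1, fun h => absurd h h2⟩)
    · exact Or.inr (Or.inr ⟨exy.symm, (Ptot x y exy).resolve_left h1, fun h => absurd h h1⟩)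
  · intro a b c d eab ebc ecd rab rbc rcd rda
    have ne1 : ∀ t : Fin 4, t + 1 ≠ t := by decide
    have ne3 : ∀ t : Fin 4, t ≠ t + 1 + 1 + 1 := by decide
    have kab : K a b := rab.resolve_right fun h => ne1 _ (eab.symm.trans h.1)
    have kbc : K b c := rbc.resolve_right fun h => ne1 _ (ebc.symm.trans h.1)
    have kcd : K c d := rcd.resolve_right fun h => ne1 _ (ecd.symm.trans h.1)
    have kda : K d a := rda.resolve_right fun h => ne3 (τ d) (by rw [← ecd, ← ebc, ← eab]; exact h.1)
    have main : ∀ a b c d, τ a = 0 → τ b = 3 → τ c = 2 → τ d = 1 → K a b → K b c → K c d → K d a →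
        False := by
      intro a b c d ha hb hc hd kab kbc kcd kda
      have ma : a ∈ C := (hτC a).1 (ha ▸ c0)
      have mc : c ∈ C := (hτC c).1 (hc ▸ c2)
      have mb := hI2 _ (hτ3 b hb)
      have md := hI1 _ (hτ1 d hd)
      rw [Kci _ _ ma mb] at kab
      rw [Kic _ _ mc mb] at kbc
      rw [Kci _ _ mc md] at kcd
      rw [Kic _ _ ma md] at kda
      exact hτ2 c hc a ⟨mc, ma, ⟨d, hτ1 d hd, kcd, kda⟩, ⟨b, hτ3 b hb, kbc, kab⟩⟩
    have r0 : (0 : Fin 4) + 1 = 1 := rfl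
    have r1 : (1 : Fin 4) + 1 = 2 := rfl
    have r2 : (2 : Fin 4) + 1 = 3 := rfl
    have r3 : (3 : Fin 4) + 1 = 0 := rfl
    rcases fin4 (τ d) with hd | hd | hd | hd
    · rw [hd, r0] at ecd
      rw [ecd, r1] at ebc
      rw [ebc, r2] at eab
      exact main d a b c hd eab ebc ecd kda kab kbc kcd
    · rw [hd, r1] at ecd
      rw [ecd, r2] at ebc
      rw [ebc, r3] at eab
      exact main a b c d eab ebc ecd hd kab kbc kcd kda
    · rw [hd, r2] at ecd
      rw [ecd, r3] at ebc
      rw [ebc, r0] at eab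
      exact main b c d a ebc ecd hd eab kbc kcd kda kab
    · rw [hd, r3] at ecd
      rw [ecd, r0] at ebc
      rw [ebc, r1] at eab
      exact main c d a b ecd hd eab ebc kcd kda kab kbc
  · intro x y hne hx hy
    exact hCl ((hτC x).1 hx) ((hτC y).1 hy) hne
  · intro x y hx hy
    exact hIn ((hI x).2 (mt (hτC x).2 hx)) ((hI y).2 (mt (hτC y).2 hy))
  · intro x y hx hy h
    exact Or.inl (Or.inl ⟨mt (hτC y).2 hy, (hτC x).1 hx, h.symm⟩)
  · intro x y hx hy h
    exact Or.inl (Or.inr ⟨(hτC x).1 hx, mt (hτC y).2 hy, h⟩)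

lemma s_off (n : ℕ) (a b : Fin 4) (ha : isC a) (hb : ¬ isC b) :
    (n : ℤ) * s a b = off n a b ∧ (n : ℤ) * s b a = - (off n a b : ℤ) := by
  unfold isC at ha hb
  rcases fin4 a with rfl | rfl | rfl | rfl <;> rcases fin4 b with rfl | rfl | rfl | rfl <;>
    simp_all [s, off]

end emb

end SPG

/-- For every positive `n` there is a split permutation graph with `4n³` vertices
containing every `n`-vertex split permutation graph as an induced subgraph. -/
theorem exists_universal_split_permutation_graph (n : ℕ) (hn : 0 < n) :
    ∃ U : SimpleGraph (Fin (4 * n ^ 3)), IsSplitPermGraph U ∧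
      ∀ (W : Type) [Fintype W] (H : SimpleGraph W),
        Fintype.card W = n → IsSplitPermGraph H → Nonempty (H ↪g U) := by
  classical
  let q : Fin (4 * n ^ 3) ≃ Fin 4 × Fin (n ^ 3) := finProdFinEquiv.symm
  refine ⟨SPG.UG (fun v => (q v).1) (fun v => (q v).2.val) n, SPG.UG_split _ _ _, ?_⟩
  intro W _ H hc hH
  obtain ⟨τ, R, hg, hCC, hII, hA, hB⟩ := SPG.exists_good H hH
  obtain ⟨f, hf1, hf2⟩ := SPG.potential hg n hc
  let φ : W → Fin (4 * n ^ 3) := fun x => q.symm (τ x, ⟨f x, hf1 x⟩)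
  have hφ : ∀ x, q (φ x) = (τ x, ⟨f x, hf1 x⟩) := fun x => q.apply_symm_apply _
  have hinj : Function.Injective φ := by
    intro x y hxy
    have h := congrArg q hxy
    rw [hφ, hφ] at h
    simp only [Prod.mk.injEq, Fin.mk.injEq] at h
    by_contra hne
    rcases hg.tot x y h.1 hne with r | r
    · have := hf2 _ _ r
      rw [h.1, SPG.s_same] at this
      omega
    · have := hf2 _ _ r
      rw [h.1, SPG.s_same] at this
      omega
  have hcross : ∀ x y, SPG.isC (τ x) → ¬ SPG.isC (τ y) →
      (f y < f x + SPG.off n (τ x) (τ y) ↔ H.Adj x y) := by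
    intro x y hx hy
    obtain ⟨s1, s2⟩ := SPG.s_off n _ _ hx hy
    by_cases h : H.Adj x y
    · have := hf2 _ _ (hA x y hx hy h)
      rw [s2] at this
      simp only [h, iff_true]
      omega
    · have := hf2 _ _ (hB x y hx hy h)
      rw [s1] at this
      simp only [h, iff_false]
      omega
  refine ⟨⟨⟨φ, hinj⟩, ?_⟩⟩
  intro x y
  show (φ x ≠ φ y ∧ _) ↔ _
  simp only [Function.Embedding.coeFn_mk, hφ, hinj.ne_iff]
  by_cases hx : SPG.isC (τ x) <;> by_cases hy : SPG.isC (τ y)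
  · simp only [hx, hy, true_and, true_or, and_true, not_true, false_and]
    exact ⟨fun h => hCC x y h hx hy, fun h => h.ne⟩
  · simp only [hx, hy, true_and, false_and, and_false, false_or, or_false, not_false_eq_true]
    rw [hcross x y hx hy]
    exact ⟨fun h => h.2, fun h => ⟨h.ne, h⟩⟩
  · simp only [hx, hy, true_and, false_and, and_false, false_or, or_false, not_false_eq_true]
    rw [hcross y x hy hx, H.adj_comm]
    exact ⟨fun h => h.2, fun h => ⟨h.ne, h⟩⟩
  · simp only [hx, hy, false_and, or_false, and_false, false_iff]
    exact hII x y hx hy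
end

section
/- Every split permutation graph with n vertices is isomorphic to an induced subgraph of some symmetric split permutation graph with exactly 2n vertices. -/
/-- The universal threshold graph `T_m`: clique `c₀,…,c_{m-1}` (left summand),
independent set `i₀,…,i_{m-1}` (right summand), with `i_j` adjacent to `c_a` iff `a ≤ j`. -/
def univThresholdGraph (m : ℕ) : SimpleGraph (Fin m ⊕ Fin m) :=
  SimpleGraph.fromRel (fun x y =>
    match x, y with
    | Sum.inl _, Sum.inl _ => True
    | Sum.inl a, Sum.inr j => (a : ℕ) ≤ (j : ℕ)
    | _, _ => False)

/-- `G` is a symmetric split permutation graph witnessed by the partition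
`C = C1 ∪ C2`, `I = I1 ∪ I2`. -/
def IsSymSplitPermWith {V : Type*} (G : SimpleGraph V) (C1 C2 I1 I2 : Set V) : Prop :=
  (C1 ∪ C2) ∪ (I1 ∪ I2) = Set.univ ∧
  Disjoint C1 C2 ∧ Disjoint I1 I2 ∧ Disjoint (C1 ∪ C2) (I1 ∪ I2) ∧
  G.IsClique (C1 ∪ C2) ∧ IndepSet G (I1 ∪ I2) ∧
  IsThresholdGraph (G.induce (C1 ∪ (I1 ∪ I2))) ∧
  IsThresholdGraph (G.induce (C2 ∪ (I1 ∪ I2))) ∧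
  IsThresholdGraph (G.induce ((C1 ∪ C2) ∪ I1)) ∧
  IsThresholdGraph (G.induce ((C1 ∪ C2) ∪ I2)) ∧
  (∃ m1 : ℕ, Nonempty (G.induce (C1 ∪ I1) ≃g univThresholdGraph m1)) ∧
  (∃ m2 : ℕ, Nonempty (G.induce (C2 ∪ I2) ≃g univThresholdGraph m2))

/-- A symmetric split permutation graph. -/
def IsSymSplitPermGraph {V : Type*} (G : SimpleGraph V) : Prop :=
  ∃ C1 C2 I1 I2 : Set V, IsSymSplitPermWith G C1 C2 I1 I2


set_option linter.unusedSimpArgs false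

theorem ssp_thr_iff {V : Type*} (G : SimpleGraph V) (S : Set V) :
    IsThresholdGraph (G.induce S) ↔ ∀ x ∈ S, ∀ y ∈ S,
      (∀ z ∈ S, G.Adj x z → G.Adj y z ∨ z = y) ∨ (∀ z ∈ S, G.Adj y z → G.Adj x z ∨ z = x) := by
  simp [IsThresholdGraph, VicinalChain, VicinalLE, Set.subset_def, or_comm]

theorem ssp_order {W : Type} {K : Type} [LinearOrder K] (H : SimpleGraph W) (C A : Set W)
    (k : W → K) (hk : Function.Injective k)
    (M1 : ∀ c ∈ C, ∀ c' ∈ C, (c ∈ A ↔ c' ∈ A) → k c ≤ k c' → ∀ i ∉ C, H.Adj c' i → H.Adj c i)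
    (M2 : ∀ i ∉ C, ∀ i' ∉ C, (i ∈ A ↔ i' ∈ A) → k i ≤ k i' → ∀ c ∈ C, H.Adj c i → H.Adj c i') :
    ∃ L : LinearOrder W,
      (∀ c ∈ C, ∀ c' ∈ C, (c ∈ A ↔ c' ∈ A) → c ≤ c' → ∀ i ∉ C, H.Adj c' i → H.Adj c i) ∧
      (∀ i ∉ C, ∀ i' ∉ C, (i ∈ A ↔ i' ∈ A) → i ≤ i' → ∀ c ∈ C, H.Adj c i → H.Adj c i') ∧
      (∀ c ∈ C, ∀ i ∉ C, (c ∈ A ↔ i ∈ A) → (H.Adj c i ↔ c ≤ i)) := by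
  classical
  let le : W → W → Prop := fun x y => (x ∈ A ∧ y ∉ A) ∨ ((x ∈ A ↔ y ∈ A) ∧
    ((x ∈ C ∧ y ∈ C ∧ k x ≤ k y) ∨ (x ∉ C ∧ y ∉ C ∧ k x ≤ k y) ∨ (x ∈ C ∧ y ∉ C ∧ H.Adj x y) ∨
      (x ∉ C ∧ y ∈ C ∧ ¬ H.Adj y x)))
  have hinj : ∀ x y, k x ≤ k y → k y ≤ k x → x = y := fun x y h h' => hk (le_antisymm h h')
  let L : LinearOrder W :=
    { le := le
      le_refl := by intro x; simp only [le]; grind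
      le_trans := by
        intro x y z
        simp only [le]
        have t := @le_trans K _ (k x) (k y) (k z)
        have t1 := le_total (k x) (k z)
        have h1 : x ∈ C → y ∈ C → (x ∈ A ↔ y ∈ A) → k x ≤ k y → z ∉ C → H.Adj y z → H.Adj x z :=
          fun h1 h2 h3 h4 h5 => M1 x h1 y h2 h3 h4 z h5
        have h2 : z ∈ C → x ∈ C → (z ∈ A ↔ x ∈ A) → k z ≤ k x → y ∉ C → H.Adj x y → H.Adj z y :=
          fun h1 h2 h3 h4 h5 => M1 z h1 x h2 h3 h4 y h5
        have h3 : y ∈ C → z ∈ C → (y ∈ A ↔ z ∈ A) → k y ≤ k z → x ∉ C → H.Adj z x → H.Adj y x :=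
          fun h1 h2 h3 h4 h5 => M1 y h1 z h2 h3 h4 x h5
        have h4 : x ∉ C → y ∉ C → (x ∈ A ↔ y ∈ A) → k x ≤ k y → z ∈ C → H.Adj z x → H.Adj z y :=
          fun h1 h2 h3 h4 h5 => M2 x h1 y h2 h3 h4 z h5
        have h5 : z ∉ C → x ∉ C → (z ∈ A ↔ x ∈ A) → k z ≤ k x → y ∈ C → H.Adj y z → H.Adj y x :=
          fun h1 h2 h3 h4 h5 => M2 z h1 x h2 h3 h4 y h5
        have h6 : y ∉ C → z ∉ C → (y ∈ A ↔ z ∈ A) → k y ≤ k z → x ∈ C → H.Adj x y → H.Adj x z :=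
          fun h1 h2 h3 h4 h5 => M2 y h1 z h2 h3 h4 x h5
        clear M1 M2 hinj le hk
        by_cases x ∈ C <;> by_cases y ∈ C <;> by_cases z ∈ C <;> simp_all <;> grind
      le_antisymm := by
        intro x y
        simp only [le]
        have := hinj x y
        grind
      le_total := by
        intro x y
        simp only [le]
        have t2 := le_total (k x) (k y)
        grind
      toDecidableLE := Classical.decRel _ }
  refine ⟨L, ?_, ?_, ?_⟩
  · intro c hc c' hc' hA h
    have h : le c c' := h
    simp only [le] at h
    refine M1 c hc c' hc' hA ?_
    grind
  · intro c hc c' hc' hA h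
    have h : le c c' := h
    simp only [le] at h
    refine M2 c hc c' hc' hA ?_
    grind
  · intro c hc i hi hA
    change _ ↔ le c i
    simp only [le]
    grind

/-- base symmetric graph -/
def sspGraph {W : Type} (R : W → W → Prop) : SimpleGraph (W ⊕ W) :=
  SimpleGraph.fromRel (fun x y =>
    match x, y with
    | Sum.inl _, Sum.inl _ => True
    | Sum.inl a, Sum.inr j => R a j
    | _, _ => False)

theorem ssp_ll {W : Type} (R : W → W → Prop) (a b : W) :
    (sspGraph R).Adj (Sum.inl a) (Sum.inl b) ↔ a ≠ b := by simp [sspGraph]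
theorem ssp_lr {W : Type} (R : W → W → Prop) (a b : W) :
    (sspGraph R).Adj (Sum.inl a) (Sum.inr b) ↔ R a b := by simp [sspGraph]
theorem ssp_rl {W : Type} (R : W → W → Prop) (a b : W) :
    (sspGraph R).Adj (Sum.inr a) (Sum.inl b) ↔ R b a := by simp [sspGraph]
theorem ssp_rr {W : Type} (R : W → W → Prop) (a b : W) :
    ¬ (sspGraph R).Adj (Sum.inr a) (Sum.inr b) := by simp [sspGraph]
theorem ssp_T (m : ℕ) : univThresholdGraph m = SimpleGraph.fromRel (fun x y =>
    match x, y with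
    | Sum.inl _, Sum.inl _ => True
    | Sum.inl a, Sum.inr j => (a : ℕ) ≤ (j : ℕ)
    | _, _ => False) := rfl

theorem ssp_iso {W V : Type} [Fintype W] [LinearOrder W] (A : Set W) (R : W → W → Prop)
    (φ : V ≃ W ⊕ W) (hR : ∀ p ∈ A, ∀ q ∈ A, (R p q ↔ p ≤ q)) :
    ∃ m : ℕ, Nonempty (((sspGraph R).comap φ).induce
      ({v | ∃ p ∈ A, φ v = Sum.inl p} ∪ {v | ∃ p ∈ A, φ v = Sum.inr p}) ≃g
        univThresholdGraph m) := by
  classical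
  let e : Fin (Fintype.card A) ≃o A := Fintype.orderIsoFinOfCardEq A rfl
  refine ⟨Fintype.card A, ⟨RelIso.symm ?_⟩⟩
  let f : Fin (Fintype.card A) ⊕ Fin (Fintype.card A) →
      ↥({v | ∃ p ∈ A, φ v = Sum.inl p} ∪ {v | ∃ p ∈ A, φ v = Sum.inr p}) := fun x =>
    match x with
    | Sum.inl a => ⟨φ.symm (Sum.inl (e a).1), Or.inl ⟨_, (e a).2, by simp⟩⟩
    | Sum.inr a => ⟨φ.symm (Sum.inr (e a).1), Or.inr ⟨_, (e a).2, by simp⟩⟩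
  have hf : Function.Bijective f := by
    constructor
    · rintro (a | a) (b | b) h <;> simp [f, Subtype.ext_iff] at h
      · exact congrArg Sum.inl (e.injective (Subtype.ext h))
      · exact congrArg Sum.inr (e.injective (Subtype.ext h))
    · rintro ⟨v, ⟨p, hp, h⟩ | ⟨p, hp, h⟩⟩
      · refine ⟨Sum.inl (e.symm ⟨p, hp⟩), ?_⟩
        simp [f, ← h]
      · refine ⟨Sum.inr (e.symm ⟨p, hp⟩), ?_⟩
        simp [f, ← h]
  refine ⟨Equiv.ofBijective f hf, ?_⟩
  have hne : ∀ a b, (e a).1 = (e b).1 ↔ (a : ℕ) = b := by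
    intro a b
    rw [← Subtype.ext_iff, e.injective.eq_iff, Fin.ext_iff]
  have hee : ∀ a b, R (e a).1 (e b).1 ↔ (a : ℕ) ≤ b := by
    intro a b
    rw [hR _ (e a).2 _ (e b).2, Subtype.coe_le_coe, e.le_iff_le]; rfl
  rintro (a | a) (b | b) <;>
    simp [f, ssp_ll, ssp_lr, ssp_rl, ssp_rr, univThresholdGraph, hee, hne, Fin.ext_iff]

theorem ssp_thrC {W V : Type} [LinearOrder W] (A : Set W) (R : W → W → Prop)
    (φ : V ≃ W ⊕ W)
    (h1 : ∀ p ∈ A, ∀ p' ∈ A, p ≤ p' → ∀ q, R p' q → R p q) :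
    IsThresholdGraph (((sspGraph R).comap φ).induce
      ({v | ∃ p ∈ A, φ v = Sum.inl p} ∪ {v | ∃ p, φ v = Sum.inr p})) := by
  rw [ssp_thr_iff]
  rintro x (⟨a, ha, hx⟩ | ⟨a, hx⟩) y (⟨b, hb, hy⟩ | ⟨b, hy⟩)
  · rcases le_total a b with h | h
    · right
      rintro z (⟨c, hc, hz⟩ | ⟨c, hz⟩)
      · rw [← φ.injective.eq_iff]
        simp [hx, hy, hz, ssp_ll, ssp_lr]; grind
      · simp [hx, hy, hz, ssp_ll, ssp_lr]; intro h'; left; exact h1 _ ha _ hb h _ h'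
    · left
      rintro z (⟨c, hc, hz⟩ | ⟨c, hz⟩)
      · rw [← φ.injective.eq_iff]
        simp [hx, hy, hz, ssp_ll, ssp_lr]; grind
      · simp [hx, hy, hz, ssp_ll, ssp_lr]; intro h'; left; exact h1 _ hb _ ha h _ h'
  · right
    rintro z (⟨c, hc, hz⟩ | ⟨c, hz⟩) <;> rw [← φ.injective.eq_iff] <;>
      simp [hx, hy, hz, ssp_ll, ssp_lr, ssp_rl, ssp_rr]; grind
  · left
    rintro z (⟨c, hc, hz⟩ | ⟨c, hz⟩) <;> rw [← φ.injective.eq_iff] <;>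
      simp [hx, hy, hz, ssp_ll, ssp_lr, ssp_rl, ssp_rr]; grind
  · by_cases h : ∀ p ∈ A, R p a → R p b
    · left
      rintro z (⟨c, hc, hz⟩ | ⟨c, hz⟩) <;> rw [← φ.injective.eq_iff] <;>
        simp [hx, hy, hz, ssp_ll, ssp_lr, ssp_rl, ssp_rr]; grind
    · right
      push Not at h
      obtain ⟨p, hp, hpa, hpb⟩ := h
      rintro z (⟨c, hc, hz⟩ | ⟨c, hz⟩) <;> rw [← φ.injective.eq_iff] <;>
        simp [hx, hy, hz, ssp_ll, ssp_lr, ssp_rl, ssp_rr]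
      intro hcb
      rcases le_total c p with h | h
      · exact h1 _ hc _ hp h _ hpa
      · exact absurd (h1 _ hp _ hc h _ hcb) hpb

theorem ssp_thrI {W V : Type} [LinearOrder W] (A : Set W) (R : W → W → Prop)
    (φ : V ≃ W ⊕ W)
    (h1 : ∀ p ∈ A, ∀ p' ∈ A, p ≤ p' → ∀ q, R q p → R q p') :
    IsThresholdGraph (((sspGraph R).comap φ).induce
      ({v | ∃ p, φ v = Sum.inl p} ∪ {v | ∃ p ∈ A, φ v = Sum.inr p})) := by
  rw [ssp_thr_iff]
  rintro x (⟨a, hx⟩ | ⟨a, ha, hx⟩) y (⟨b, hy⟩ | ⟨b, hb, hy⟩)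
  · by_cases h : ∀ p ∈ A, R a p → R b p
    · left
      rintro z (⟨c, hz⟩ | ⟨c, hc, hz⟩) <;> rw [← φ.injective.eq_iff] <;>
        simp [hx, hy, hz, ssp_ll, ssp_lr, ssp_rl, ssp_rr] <;> grind
    · right
      push Not at h
      obtain ⟨p, hp, hpa, hpb⟩ := h
      rintro z (⟨c, hz⟩ | ⟨c, hc, hz⟩) <;> rw [← φ.injective.eq_iff] <;>
        simp [hx, hy, hz, ssp_ll, ssp_lr, ssp_rl, ssp_rr]
      · grind
      intro hcb
      rcases le_total c p with h | h
      · exact absurd (h1 _ hc _ hp h _ hcb) hpb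
      · exact h1 _ hp _ hc h _ hpa
  · right
    rintro z (⟨c, hz⟩ | ⟨c, hc, hz⟩) <;> rw [← φ.injective.eq_iff] <;>
      simp [hx, hy, hz, ssp_ll, ssp_lr, ssp_rl, ssp_rr]; grind
  · left
    rintro z (⟨c, hz⟩ | ⟨c, hc, hz⟩) <;> rw [← φ.injective.eq_iff] <;>
      simp [hx, hy, hz, ssp_ll, ssp_lr, ssp_rl, ssp_rr]; grind
  · rcases le_total a b with h | h
    · left
      rintro z (⟨c, hz⟩ | ⟨c, hc, hz⟩) <;> rw [← φ.injective.eq_iff] <;>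
        simp [hx, hy, hz, ssp_ll, ssp_lr, ssp_rl, ssp_rr]
      exact h1 _ ha _ hb h _
    · right
      rintro z (⟨c, hz⟩ | ⟨c, hc, hz⟩) <;> rw [← φ.injective.eq_iff] <;>
        simp [hx, hy, hz, ssp_ll, ssp_lr, ssp_rl, ssp_rr]
      exact h1 _ hb _ ha h _

theorem ssp_sym {W V : Type} [Fintype W] [LinearOrder W] (A : Set W) (R : W → W → Prop)
    (φ : V ≃ W ⊕ W)
    (h1 : ∀ p p', (p ∈ A ↔ p' ∈ A) → p ≤ p' → ∀ q, R p' q → R p q)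
    (h2 : ∀ p p', (p ∈ A ↔ p' ∈ A) → p ≤ p' → ∀ q, R q p → R q p')
    (h3 : ∀ p q, (p ∈ A ↔ q ∈ A) → (R p q ↔ p ≤ q)) :
    IsSymSplitPermGraph ((sspGraph R).comap φ) := by
  have eL : {v | ∃ p ∈ A, φ v = Sum.inl p} ∪ {v | ∃ p ∈ Aᶜ, φ v = Sum.inl p}
      = {v | ∃ p, φ v = Sum.inl p} := by
    ext v; simp only [Set.mem_union, Set.mem_ofPred_eq, Set.mem_compl_iff]; grind
  have eR : {v | ∃ p ∈ A, φ v = Sum.inr p} ∪ {v | ∃ p ∈ Aᶜ, φ v = Sum.inr p}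
      = {v | ∃ p, φ v = Sum.inr p} := by
    ext v; simp only [Set.mem_union, Set.mem_ofPred_eq, Set.mem_compl_iff]; grind
  refine ⟨{v | ∃ p ∈ A, φ v = Sum.inl p}, {v | ∃ p ∈ Aᶜ, φ v = Sum.inl p},
    {v | ∃ p ∈ A, φ v = Sum.inr p}, {v | ∃ p ∈ Aᶜ, φ v = Sum.inr p}, ?_⟩
  unfold IsSymSplitPermWith
  rw [eL, eR]
  refine ⟨?_, ?_, ?_, ?_, ?_, ?_, ?_, ?_, ?_, ?_, ?_, ?_⟩
  · ext v
    rcases h : φ v with a | a <;> simp [h]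
  · rw [Set.disjoint_left]; rintro v ⟨p, hp, h⟩ ⟨q, hq, h'⟩; simp_all
  · rw [Set.disjoint_left]; rintro v ⟨p, hp, h⟩ ⟨q, hq, h'⟩; simp_all
  · rw [Set.disjoint_left]; rintro v ⟨p, h⟩ ⟨q, h'⟩; simp_all
  · rintro v ⟨p, h⟩ w ⟨q, h'⟩ hne
    rw [← φ.injective.ne_iff] at hne
    simp [h, h', ssp_ll] at hne ⊢
    exact hne
  · rintro v ⟨p, h⟩ w ⟨q, h'⟩
    simp [h, h', ssp_rr]
  · exact ssp_thrC A R φ fun p hp p' hp' => h1 p p' (by tauto)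
  · exact ssp_thrC Aᶜ R φ fun p hp p' hp' => h1 p p' (iff_of_false hp hp')
  · exact ssp_thrI A R φ fun p hp p' hp' => h2 p p' (by tauto)
  · exact ssp_thrI Aᶜ R φ fun p hp p' hp' => h2 p p' (iff_of_false hp hp')
  · exact ssp_iso A R φ fun p hp p' hp' => h3 p p' (by tauto)
  · exact ssp_iso Aᶜ R φ fun p hp p' hp' => h3 p p' (iff_of_false hp hp')

theorem ssp_main {W V : Type} [Fintype W] [LinearOrder W] (H : SimpleGraph W) (C A : Set W)
    (φ : V ≃ W ⊕ W) (hC : H.IsClique C) (hI : ∀ x ∉ C, ∀ y ∉ C, ¬ H.Adj x y)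
    (h1 : ∀ c ∈ C, ∀ c' ∈ C, (c ∈ A ↔ c' ∈ A) → c ≤ c' → ∀ i ∉ C, H.Adj c' i → H.Adj c i)
    (h2 : ∀ i ∉ C, ∀ i' ∉ C, (i ∈ A ↔ i' ∈ A) → i ≤ i' → ∀ c ∈ C, H.Adj c i → H.Adj c i')
    (h3 : ∀ c ∈ C, ∀ i ∉ C, (c ∈ A ↔ i ∈ A) → (H.Adj c i ↔ c ≤ i)) :
    ∃ G : SimpleGraph V, IsSymSplitPermGraph G ∧ Nonempty (H ↪g G) := by
  classical
  let R : W → W → Prop := fun p q => ((p ∈ A ↔ q ∈ A) ∧ p ≤ q) ∨ (¬ (p ∈ A ↔ q ∈ A) ∧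
    ∃ p0 ∈ C, ∃ q0 ∉ C, (p ∈ A ↔ p0 ∈ A) ∧ (q ∈ A ↔ q0 ∈ A) ∧ p ≤ p0 ∧ q0 ≤ q ∧ H.Adj p0 q0)
  have hR : ∀ c ∈ C, ∀ i ∉ C, (R c i ↔ H.Adj c i) := by
    intro c hc i hi
    by_cases h : c ∈ A ↔ i ∈ A
    · simp [R, h, h3 c hc i hi h]
    · simp only [R, h, false_and, false_or, not_false_eq_true, true_and]
      constructor
      · rintro ⟨p0, hp0, q0, hq0, e1, e2, l1, l2, hadj⟩
        exact h2 q0 hq0 i hi e2.symm l2 c hc (h1 c hc p0 hp0 e1 l1 q0 hq0 hadj)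
      · intro hadj
        exact ⟨c, hc, i, hi, Iff.rfl, Iff.rfl, le_rfl, le_rfl, hadj⟩
  refine ⟨(sspGraph R).comap φ, ssp_sym A R φ ?_ ?_ ?_, ⟨?_⟩⟩
  · rintro p p' hA hle q (⟨a, b⟩ | ⟨a, p0, hp0, q0, hq0, e1, e2, l1, l2, hadj⟩)
    · exact Or.inl ⟨hA.trans a, hle.trans b⟩
    · exact Or.inr ⟨by tauto, p0, hp0, q0, hq0, hA.trans e1, e2, hle.trans l1, l2, hadj⟩
  · rintro p p' hA hle q (⟨a, b⟩ | ⟨a, p0, hp0, q0, hq0, e1, e2, l1, l2, hadj⟩)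
    · exact Or.inl ⟨a.trans hA, b.trans hle⟩
    · exact Or.inr ⟨by tauto, p0, hp0, q0, hq0, e1, hA.symm.trans e2, l1, l2.trans hle, hadj⟩
  · intro p q h
    simp [R, h]
  · refine ⟨⟨fun w => φ.symm (if w ∈ C then Sum.inl w else Sum.inr w), ?_⟩, ?_⟩
    · intro x y h
      have h := φ.symm.injective h
      split_ifs at h <;> simp_all
    · intro x y
      change (sspGraph R).Adj (φ (φ.symm (if x ∈ C then Sum.inl x else Sum.inr x)))
        (φ (φ.symm (if y ∈ C then Sum.inl y else Sum.inr y))) ↔ _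
      rw [φ.apply_symm_apply, φ.apply_symm_apply]
      by_cases hx : x ∈ C <;> by_cases hy : y ∈ C <;>
        simp [hx, hy, ssp_ll, ssp_lr, ssp_rl, ssp_rr]
      · exact ⟨fun h => hC hx hy h, fun h => h.ne⟩
      · exact hR x hx y hy
      · rw [hR y hy x hx, H.adj_comm]
      · exact hI x hx y hy

theorem ssp_key {W : Type} [Fintype W] (H : SimpleGraph W) (C A : Set W)
    (hc : ∀ c ∈ C, ∀ c' ∈ C, (c ∈ A ↔ c' ∈ A) →
      (∀ i ∉ C, H.Adj c i → H.Adj c' i) ∨ (∀ i ∉ C, H.Adj c' i → H.Adj c i))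
    (hi : ∀ i ∉ C, ∀ i' ∉ C, (i ∈ A ↔ i' ∈ A) →
      (∀ c ∈ C, H.Adj c i → H.Adj c i') ∨ (∀ c ∈ C, H.Adj c i' → H.Adj c i)) :
    ∃ k : W → ℤ ×ₗ Fin (Fintype.card W), Function.Injective k ∧
    (∀ c ∈ C, ∀ c' ∈ C, (c ∈ A ↔ c' ∈ A) → k c ≤ k c' → ∀ i ∉ C, H.Adj c' i → H.Adj c i) ∧
    (∀ i ∉ C, ∀ i' ∉ C, (i ∈ A ↔ i' ∈ A) → k i ≤ k i' → ∀ c ∈ C, H.Adj c i → H.Adj c i') := by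
  classical
  let e := Fintype.equivFin W
  let D : W → Finset W := fun x => if x ∈ C then Finset.univ.filter (fun i => i ∉ C ∧ H.Adj x i)
    else Finset.univ.filter (fun c => c ∈ C ∧ H.Adj c x)
  let d : W → ℤ := fun x => if x ∈ C then - ((D x).card : ℤ) else (D x).card
  refine ⟨fun x => toLex (d x, e x), ?_, ?_, ?_⟩
  · intro x y h
    have := congrArg (fun z => (ofLex z).2) h
    simpa using this
  · intro c hC c' hC' hA hk i hI hadj
    have hd : d c ≤ d c' := by
      rw [Prod.Lex.le_iff] at hk
      simp at hk
      omega
    simp only [d, hC, hC', if_true] at hd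
    rcases hc c hC c' hC' hA with h | h
    · have hsub : D c ⊆ D c' := by
        intro j; simp only [D, hC, hC', if_true]; simp; intro a b; exact ⟨a, h j a b⟩
      have := Finset.eq_of_subset_of_card_le hsub (by omega)
      have h2 : i ∈ D c := by rw [this]; simp [D, hC', hI, hadj]
      simp [D, hC] at h2
      exact h2.2
    · exact h i hI hadj
  · intro c hC c' hC' hA hk i hI hadj
    have hd : d c ≤ d c' := by
      rw [Prod.Lex.le_iff] at hk
      simp at hk
      omega
    simp only [d, hC, hC', if_false] at hd
    rcases hi c hC c' hC' hA with h | h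
    · exact h i hI hadj
    · have hsub : D c' ⊆ D c := by
        intro j; simp only [D, hC, hC', if_false]; simp; intro a b; exact ⟨a, h j a b⟩
      have := Finset.eq_of_subset_of_card_le hsub (by omega)
      have h2 : i ∈ D c' := by rw [this]; simp [D, hC, hI, hadj]
      simp [D, hC'] at h2
      exact h2.2

theorem split_perm_embeds_in_symmetric (n : ℕ) (W : Type) [Fintype W]
    (H : SimpleGraph W) (hW : Fintype.card W = n) (hH : IsSplitPermGraph H) :
    ∃ G : SimpleGraph (Fin (2 * n)), IsSymSplitPermGraph G ∧ Nonempty (H ↪g G) := by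
  classical
  obtain ⟨C, I, C1, C2, I1, I2, hU, hCI, hC, hI, eC, dC, eI, dI, t1, t2, t3, t4⟩ := hH
  have hIC : ∀ x, x ∉ C ↔ x ∈ I := by
    intro x
    have h1 : x ∈ C ∪ I := by rw [hU]; trivial
    have h2 : x ∈ C → x ∉ I := fun h => Set.disjoint_left.1 hCI h
    simp only [Set.mem_union] at h1
    tauto
  rw [ssp_thr_iff] at t1 t2 t3 t4
  have dC' : ∀ x, x ∈ C1 → x ∉ C2 := fun x h => Set.disjoint_left.1 dC h
  have dI' : ∀ x, x ∈ I1 → x ∉ I2 := fun x h => Set.disjoint_left.1 dI h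
  have eC' : ∀ x, x ∈ C ↔ x ∈ C1 ∨ x ∈ C2 := fun x => by rw [← eC]; rfl
  have eI' : ∀ x, x ∈ I ↔ x ∈ I1 ∨ x ∈ I2 := fun x => by rw [← eI]; rfl
  simp only [Set.mem_union] at t1 t2 t3 t4
  have hc : ∀ c ∈ C, ∀ c' ∈ C, (c ∈ C1 ∪ I1 ↔ c' ∈ C1 ∪ I1) →
      (∀ i ∉ C, H.Adj c i → H.Adj c' i) ∨ (∀ i ∉ C, H.Adj c' i → H.Adj c i) := by
    intro c hc c' hc' hA
    simp only [Set.mem_union] at hA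
    by_cases h : c ∈ C1
    · have h' : c' ∈ C1 := by grind
      have := t1 c (Or.inl h) c' (Or.inl h')
      grind
    · have h0 : c ∈ C2 := by grind
      have h' : c' ∈ C2 := by grind
      have := t2 c (Or.inl h0) c' (Or.inl h')
      grind
  have hi : ∀ i ∉ C, ∀ i' ∉ C, (i ∈ C1 ∪ I1 ↔ i' ∈ C1 ∪ I1) →
      (∀ c ∈ C, H.Adj c i → H.Adj c i') ∨ (∀ c ∈ C, H.Adj c i' → H.Adj c i) := by
    intro c hc c' hc' hA
    simp only [Set.mem_union] at hA
    simp only [fun x => H.adj_comm x c, fun x => H.adj_comm x c']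
    by_cases h : c ∈ I1
    · have h' : c' ∈ I1 := by grind
      have := t3 c (Or.inr h) c' (Or.inr h')
      grind
    · have h0 : c ∈ I2 := by grind
      have h' : c' ∈ I2 := by grind
      have := t4 c (Or.inr h0) c' (Or.inr h')
      grind
  obtain ⟨k, hk, k1, k2⟩ := ssp_key H C (C1 ∪ I1) hc hi
  obtain ⟨L, l1, l2, l3⟩ := ssp_order H C (C1 ∪ I1) k hk k1 k2
  have φ : Fin (2 * n) ≃ W ⊕ W := Fintype.equivOfCardEq (by simp [hW]; omega)
  refine ssp_main H C (C1 ∪ I1) φ hC ?_ l1 l2 l3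
  intro x hx y hy
  exact hI ((hIC x).1 hx) ((hIC y).1 hy)
end

section
/- Let G be a split graph whose vertex set is partitioned into a clique C and an independent set I. If C is a vicinal chain, then the whole vertex set of G is a vicinal chain; likewise, if I is a vicinal chain, then the whole vertex set of G is a vicinal chain (i.e., G is a threshold graph). -/
/-- In a split graph with clique `C` and independent set `I`, if `C` (resp. `I`) is
a vicinal chain then the whole vertex set is a vicinal chain, i.e. the graph is threshold. -/
theorem split_graph_vicinal_chain (V : Type*) [Fintype V] (G : SimpleGraph V) (C I : Set V)
    (hUnion : C ∪ I = Set.univ) (hDisj : Disjoint C I)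
    (hC : G.IsClique C) (hI : IndepSet G I) :
    (VicinalChain G C → VicinalChain G Set.univ) ∧
    (VicinalChain G I → VicinalChain G Set.univ) := by
  have hU : ∀ v, v ∈ C ∨ v ∈ I := fun v => by
    have : v ∈ C ∪ I := hUnion ▸ Set.mem_univ v
    exact this
  have hCI : ∀ v, v ∈ C → v ∈ I → False := fun v h1 h2 =>
    Set.disjoint_left.1 hDisj h1 h2
  have le_iff : ∀ x y, VicinalLE G x y ↔ ∀ a, G.Adj x a → G.Adj y a ∨ a = y := by
    intro x y
    simp only [VicinalLE, Set.subset_def, Set.mem_union, SimpleGraph.mem_neighborSet,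
      Set.mem_singleton_iff]
  have hC' : ∀ x y, x ∈ C → y ∈ C → x ≠ y → G.Adj x y := fun x y hx hy h => hC hx hy h
  have hIC : ∀ x y, x ∈ I → y ∈ C → VicinalLE G x y := by
    intro x y hx hy
    rw [le_iff]
    intro a ha
    have haC : a ∈ C := (hU a).resolve_right fun h => hI hx h ha
    by_cases h : a = y
    · exact Or.inr h
    · exact Or.inl (hC' y a hy haC (Ne.symm h))
  -- an alternating configuration contradicts comparability on the other side
  have key : ∀ x y a b, G.Adj x a → ¬ G.Adj y a → G.Adj y b → ¬ G.Adj x b →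
      x ≠ b → y ≠ a → (VicinalLE G a b ∨ VicinalLE G b a) → False := by
    intro x y a b hxa hya hyb hxb h1 h2 h
    rw [le_iff, le_iff] at h
    rcases h with h | h
    · rcases h x hxa.symm with h | h
      · exact hxb h.symm
      · exact h1 h
    · rcases h y hyb.symm with h | h
      · exact hya h.symm
      · exact h2 h
  have key2 : ∀ x y, ¬ (VicinalLE G x y ∨ VicinalLE G y x) →
      ∃ a b, G.Adj x a ∧ ¬ G.Adj y a ∧ G.Adj y b ∧ ¬ G.Adj x b ∧ x ≠ b ∧ y ≠ a := by
    intro x y h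
    rw [le_iff, le_iff] at h
    push Not at h
    obtain ⟨⟨a, h1, h2, h3⟩, ⟨b, h4, h5, h6⟩⟩ := h
    exact ⟨a, b, h1, h2, h4, h5, h6.symm, h3.symm⟩
  constructor
  · intro hch x _ y _
    rcases hU x with hx | hx <;> rcases hU y with hy | hy
    · exact hch hx hy
    · exact Or.inr (hIC y x hy hx)
    · exact Or.inl (hIC x y hx hy)
    · by_contra hn
      obtain ⟨a, b, h1, h2, h3, h4, h5, h6⟩ := key2 x y hn
      have ha : a ∈ C := (hU a).resolve_right fun h => hI hx h h1
      have hb : b ∈ C := (hU b).resolve_right fun h => hI hy h h3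
      exact key x y a b h1 h2 h3 h4 h5 h6 (hch ha hb)
  · intro hch x _ y _
    rcases hU x with hx | hx <;> rcases hU y with hy | hy
    · by_contra hn
      obtain ⟨a, b, h1, h2, h3, h4, h5, h6⟩ := key2 x y hn
      have ha : a ∈ I := (hU a).resolve_left fun h => h2 (hC' y a hy h h6)
      have hb : b ∈ I := (hU b).resolve_left fun h => h4 (hC' x b hx h h5)
      exact key x y a b h1 h2 h3 h4 h5 h6 (hch ha hb)
    · exact Or.inr (hIC y x hy hx)
    · exact Or.inl (hIC x y hx hy)
    · exact hch hx hy
end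

section
/- For any permutation π of length n, the permutation graph G_π is bipartite if and only if π is 321-avoiding. Consequently, the bipartite permutation graphs are exactly the triangle-free permutation graphs, which are exactly the permutation graphs of 321-avoiding permutations. -/
/-- A graph is bipartite if its vertices can be partitioned into at most two
independent sets. -/
def IsBipartiteGraph {V : Type*} (G : SimpleGraph V) : Prop :=
  ∃ A : Set V, IndepSet G A ∧ IndepSet G Aᶜ

/-- The permutation graph of `π`: vertices are positions, and `i`, `j` are adjacent
iff `i < j` and `π i > π j`. -/
def permGraph {n : ℕ} (π : Equiv.Perm (Fin n)) : SimpleGraph (Fin n) :=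
  SimpleGraph.fromRel (fun i j => i < j ∧ π j < π i)

/-- A graph is a permutation graph if it is isomorphic to `G_π` for some permutation `π`. -/
def IsPermutationGraph {V : Type*} (G : SimpleGraph V) : Prop :=
  ∃ (n : ℕ) (π : Equiv.Perm (Fin n)), Nonempty (G ≃g permGraph π)

theorem permGraph_adj {n : ℕ} (π : Equiv.Perm (Fin n)) (x y : Fin n) :
    (permGraph π).Adj x y ↔ (x < y ∧ π y < π x) ∨ (y < x ∧ π x < π y) := by
  unfold permGraph
  rw [SimpleGraph.fromRel_adj]
  constructor
  · exact fun h => h.2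
  · intro h
    refine ⟨?_, h⟩
    rintro rfl
    rcases h with h | h <;> exact lt_irrefl _ h.1

theorem bip_triangleFree {V : Type*} {G : SimpleGraph V} (h : IsBipartiteGraph G) :
    ¬ ∃ a b c : V, G.Adj a b ∧ G.Adj b c ∧ G.Adj a c := by
  rintro ⟨a, b, c, hab, hbc, hac⟩
  obtain ⟨A, h1, h2⟩ := h
  by_cases ha : a ∈ A <;> by_cases hb : b ∈ A <;> by_cases hc : c ∈ A
  · exact h1 ha hb hab
  · exact h1 ha hb hab
  · exact h1 ha hc hac
  · exact h2 hb hc hbc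
  · exact h1 hb hc hbc
  · exact h2 ha hc hac
  · exact h2 ha hb hab
  · exact h2 ha hb hab

theorem avoids_bip {n : ℕ} {π : Equiv.Perm (Fin n)} (h : Avoids321 π) :
    IsBipartiteGraph (permGraph π) := by
  refine ⟨{j | ∃ i, i < j ∧ π j < π i}, ?_, ?_⟩
  · rintro x ⟨i, hi, hi2⟩ y ⟨j, hj, hj2⟩ hxy
    rw [permGraph_adj] at hxy
    rcases hxy with hh | hh
    · exact h ⟨i, x, y, hi, hh.1, hh.2, hi2⟩
    · exact h ⟨j, y, x, hj, hh.1, hh.2, hj2⟩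
  · intro x hx y hy hxy
    rw [permGraph_adj] at hxy
    rcases hxy with hh | hh
    · exact hy ⟨x, hh⟩
    · exact hx ⟨y, hh⟩

theorem triangleFree_avoids {n : ℕ} {π : Equiv.Perm (Fin n)}
    (h : ¬ ∃ a b c, (permGraph π).Adj a b ∧ (permGraph π).Adj b c ∧ (permGraph π).Adj a c) :
    Avoids321 π := by
  rintro ⟨i, j, k, hij, hjk, h1, h2⟩
  refine h ⟨i, j, k, ?_, ?_, ?_⟩ <;> rw [permGraph_adj] <;> left
  · exact ⟨hij, h2⟩
  · exact ⟨hjk, h1⟩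
  · exact ⟨hij.trans hjk, h1.trans h2⟩

theorem bip_iso {V W : Type*} {G : SimpleGraph V} {H : SimpleGraph W} (e : G ≃g H)
    (h : IsBipartiteGraph H) : IsBipartiteGraph G := by
  obtain ⟨A, h1, h2⟩ := h
  refine ⟨e ⁻¹' A, ?_, ?_⟩
  · intro x hx y hy hxy
    exact h1 hx hy (e.map_adj_iff.2 hxy)
  · intro x hx y hy hxy
    exact h2 hx hy (e.map_adj_iff.2 hxy)

/-- `G_π` is bipartite iff `π` is 321-avoiding; consequently, a permutation graph is
bipartite iff it is triangle-free, iff it is the permutation graph of a 321-avoiding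
permutation. -/
theorem bipartite_permutation_graphs :
    (∀ (n : ℕ) (π : Equiv.Perm (Fin n)),
        IsBipartiteGraph (permGraph π) ↔ Avoids321 π) ∧
    (∀ (V : Type) [Fintype V] (G : SimpleGraph V), IsPermutationGraph G →
        (IsBipartiteGraph G ↔
          ¬ ∃ a b c : V, G.Adj a b ∧ G.Adj b c ∧ G.Adj a c)) ∧
    (∀ (V : Type) [Fintype V] (G : SimpleGraph V), IsPermutationGraph G →
        (IsBipartiteGraph G ↔
          ∃ (n : ℕ) (π : Equiv.Perm (Fin n)),
            Avoids321 π ∧ Nonempty (G ≃g permGraph π))) := by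
  refine ⟨fun n π => ⟨fun h => triangleFree_avoids (bip_triangleFree h), avoids_bip⟩, ?_, ?_⟩
  · rintro V _ G ⟨n, π, ⟨e⟩⟩
    refine ⟨bip_triangleFree, fun h => bip_iso e (avoids_bip (triangleFree_avoids ?_))⟩
    rintro ⟨a, b, c, hab, hbc, hac⟩
    exact h ⟨e.symm a, e.symm b, e.symm c, e.symm.map_adj_iff.2 hab,
      e.symm.map_adj_iff.2 hbc, e.symm.map_adj_iff.2 hac⟩
  · rintro V _ G ⟨n, π, ⟨e⟩⟩
    constructor
    · intro h
      exact ⟨n, π, triangleFree_avoids (bip_triangleFree (bip_iso e.symm h)), ⟨e⟩⟩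
    · rintro ⟨m, σ, hσ, ⟨f⟩⟩
      exact bip_iso f (avoids_bip hσ)
end

section
/- Every 321-avoiding permutation of length n ≥ 2 is obtained in exactly one way from a 321-avoiding permutation σ of length n−1 by one of the following two operations: (a) inserting the new value n into σ at a position strictly to the right of the position of the value n−1 in σ; or (b) replacing the value n−1 in σ by n and appending the value n−1 at the right end. Moreover, every permutation produced from a 321-avoiding σ of length n−1 by operation (a) or (b) is 321-avoiding. -/
/-- Operation (a): `π` (of length `m+2`) is obtained from `σ` (of length `m+1`) by
inserting the new largest value at position `p`, which lies strictly to the right of the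
position of the largest value of `σ`.  (Values and positions are 0-indexed, so the
largest value of `σ` is `Fin.last m` and the inserted value is `Fin.last (m+1)`.) -/
def ResultA (m : ℕ) (σ : Equiv.Perm (Fin (m + 1))) (p : Fin (m + 2))
    (π : Equiv.Perm (Fin (m + 2))) : Prop :=
  ((σ.symm (Fin.last m) : ℕ) < (p : ℕ)) ∧
  π p = Fin.last (m + 1) ∧
  (∀ i : Fin (m + 1), (i : ℕ) < (p : ℕ) → (π i.castSucc : ℕ) = (σ i : ℕ)) ∧
  (∀ i : Fin (m + 1), (p : ℕ) ≤ (i : ℕ) → (π i.succ : ℕ) = (σ i : ℕ))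

/-- Operation (b): `π` (of length `m+2`) is obtained from `σ` (of length `m+1`) by
replacing the largest value of `σ` by the new largest value and appending the old
largest value at the right end. -/
def ResultB (m : ℕ) (σ : Equiv.Perm (Fin (m + 1)))
    (π : Equiv.Perm (Fin (m + 2))) : Prop :=
  ((π (Fin.last (m + 1)) : ℕ) = m) ∧
  (∀ i : Fin (m + 1),
    (π i.castSucc : ℕ) = if σ i = Fin.last m then m + 1 else (σ i : ℕ))


def Ins {n : ℕ} (q v : Fin (n + 1)) (σ : Equiv.Perm (Fin n))
    (π : Equiv.Perm (Fin (n + 1))) : Prop :=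
  π q = v ∧ ∀ i, π (q.succAbove i) = v.succAbove (σ i)

theorem Ins.unique {n : ℕ} {q v : Fin (n + 1)} {σ : Equiv.Perm (Fin n)}
    {π π' : Equiv.Perm (Fin (n + 1))} (h : Ins q v σ π) (h' : Ins q v σ π') : π = π' := by
  ext1 x
  rcases Fin.eq_self_or_eq_succAbove q x with rfl | ⟨i, rfl⟩
  · rw [h.1, h'.1]
  · rw [h.2, h'.2]

theorem Ins.unique' {n : ℕ} {q v : Fin (n + 1)} {σ σ' : Equiv.Perm (Fin n)}
    {π : Equiv.Perm (Fin (n + 1))} (h : Ins q v σ π) (h' : Ins q v σ' π) : σ = σ' := by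
  ext1 i
  apply Fin.succAbove_right_injective (p := v)
  rw [← h.2, ← h'.2]

theorem Ins.exists {n : ℕ} (q v : Fin (n + 1)) (σ : Equiv.Perm (Fin n)) :
    ∃ π, Ins q v σ π := by
  refine ⟨(finSuccEquiv' q).trans ((Equiv.optionCongr σ).trans (finSuccEquiv' v).symm), ?_, ?_⟩
  · simp
  · intro i
    simp

theorem Ins.exists' {n : ℕ} (q v : Fin (n + 1)) (π : Equiv.Perm (Fin (n + 1)))
    (h : π q = v) : ∃ σ, Ins q v σ π := by
  have H : ∀ i, ∃ j, v.succAbove j = π (q.succAbove i) := by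
    intro i
    apply Fin.exists_succAbove_eq
    rw [← h]
    intro hh
    exact Fin.succAbove_ne q i (π.injective hh)
  choose f hf using H
  have hinj : Function.Injective f := by
    intro a b hab
    have := (hf a).symm.trans ((congrArg _ hab).trans (hf b))
    exact Fin.succAbove_right_injective (π.injective this)
  exact ⟨Equiv.ofBijective f (Finite.injective_iff_bijective.mp hinj), h, fun i => (hf i).symm⟩

theorem Ins.avoid {n : ℕ} {q v : Fin (n + 1)} {σ : Equiv.Perm (Fin n)}
    {π : Equiv.Perm (Fin (n + 1))} (h : Ins q v σ π) (hπ : Avoids321 π) : Avoids321 σ := by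
  rintro ⟨i, j, k, h1, h2, h3, h4⟩
  refine hπ ⟨q.succAbove i, q.succAbove j, q.succAbove k, ?_, ?_, ?_, ?_⟩
  · simpa using h1
  · simpa using h2
  · rw [h.2, h.2]; simpa using h3
  · rw [h.2, h.2]; simpa using h4

theorem resultA_iff (m : ℕ) (σ : Equiv.Perm (Fin (m + 1))) (p : Fin (m + 2))
    (π : Equiv.Perm (Fin (m + 2))) : ResultA m σ p π ↔
    ((σ.symm (Fin.last m) : ℕ) < (p : ℕ)) ∧ Ins p (Fin.last (m + 1)) σ π := by
  unfold ResultA Ins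
  refine and_congr_right fun _ => and_congr_right fun _ => ?_
  constructor
  · rintro ⟨h1, h2⟩ i
    rcases lt_or_ge (i : ℕ) p with h | h
    · rw [Fin.succAbove_of_castSucc_lt _ _ (by simpa [Fin.lt_def] using h)]
      ext
      simp [h1 i h]
    · rw [Fin.succAbove_of_le_castSucc _ _ (by simpa [Fin.le_def] using h)]
      ext
      simp [h2 i h]
  · intro H
    constructor
    · intro i h
      have := H i
      rw [Fin.succAbove_of_castSucc_lt _ _ (by simpa [Fin.lt_def] using h)] at this
      simp [this]
    · intro i h
      have := H i
      rw [Fin.succAbove_of_le_castSucc _ _ (by simpa [Fin.le_def] using h)] at this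
      simp [this]

theorem sa_val (m : ℕ) (x : Fin (m + 1)) :
    (((Fin.last m).castSucc.succAbove x : Fin (m + 2)) : ℕ)
      = if x = Fin.last m then m + 1 else (x : ℕ) := by
  have := x.isLt
  simp only [Fin.succAbove, Fin.lt_def, Fin.ext_iff, Fin.val_castSucc, Fin.val_last]
  split_ifs <;> simp <;> omega

theorem resultB_iff (m : ℕ) (σ : Equiv.Perm (Fin (m + 1)))
    (π : Equiv.Perm (Fin (m + 2))) : ResultB m σ π ↔
    Ins (Fin.last (m + 1)) (Fin.last m).castSucc σ π := by
  unfold ResultB Ins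
  refine and_congr ?_ (forall_congr' fun i => ?_)
  · rw [Fin.ext_iff]; simp
  · rw [← sa_val, Fin.succAbove_last_apply, Fin.ext_iff]

theorem avoidA {m : ℕ} {σ : Equiv.Perm (Fin (m + 1))} {p : Fin (m + 2)}
    {π : Equiv.Perm (Fin (m + 2))} (hs : Avoids321 σ)
    (hp : (σ.symm (Fin.last m) : ℕ) < (p : ℕ)) (h : Ins p (Fin.last (m + 1)) σ π) :
    Avoids321 π := by
  rintro ⟨i, j, k, h1, h2, h3, h4⟩
  rcases Fin.eq_self_or_eq_succAbove p k with rfl | ⟨k, rfl⟩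
  · rw [h.1] at h3
    exact absurd h3 (not_lt.mpr (Fin.le_last _))
  rcases Fin.eq_self_or_eq_succAbove p j with rfl | ⟨j, rfl⟩
  · rw [h.1] at h4
    exact absurd h4 (not_lt.mpr (Fin.le_last _))
  have h2' : j < k := by simpa using h2
  have h3' : σ k < σ j := by simpa [h.2] using h3
  rcases Fin.eq_self_or_eq_succAbove p i with rfl | ⟨i, rfl⟩
  · have hj : σ.symm (Fin.last m) < j := by
      rw [Fin.lt_succAbove_iff_le_castSucc, Fin.le_def] at h1
      rw [Fin.lt_def]
      simp at h1
      omega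
    refine hs ⟨σ.symm (Fin.last m), j, k, hj, h2', h3', ?_⟩
    rw [Equiv.apply_symm_apply]
    refine lt_of_le_of_ne (Fin.le_last _) ?_
    intro hh
    rw [← hh] at hj
    simp at hj
  · exact hs ⟨i, j, k, by simpa using h1, h2', h3', by simpa [h.2] using h4⟩

theorem avoidB {m : ℕ} {σ : Equiv.Perm (Fin (m + 1))}
    {π : Equiv.Perm (Fin (m + 2))} (hs : Avoids321 σ)
    (h : Ins (Fin.last (m + 1)) (Fin.last m).castSucc σ π) :
    Avoids321 π := by
  rintro ⟨i, j, k, h1, h2, h3, h4⟩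
  rcases Fin.eq_self_or_eq_succAbove (Fin.last (m + 1)) k with rfl | ⟨k, rfl⟩
  · rw [h.1] at h3
    have := (π i).isLt
    simp only [Fin.lt_def, Fin.val_castSucc, Fin.val_last] at h3 h4
    omega
  rcases Fin.eq_self_or_eq_succAbove (Fin.last (m + 1)) j with rfl | ⟨j, rfl⟩
  · exact absurd h2 (not_lt.mpr (Fin.le_last _))
  rcases Fin.eq_self_or_eq_succAbove (Fin.last (m + 1)) i with rfl | ⟨i, rfl⟩
  · exact absurd h1 (not_lt.mpr (Fin.le_last _))
  rw [h.2, h.2, Fin.succAbove_lt_succAbove_iff] at h3 h4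
  rw [Fin.succAbove_lt_succAbove_iff] at h1 h2
  exact hs ⟨i, j, k, h1, h2, h3, h4⟩

theorem insA_pos {m : ℕ} {σ : Equiv.Perm (Fin (m + 1))} {p : Fin (m + 2)}
    {π : Equiv.Perm (Fin (m + 2))} (h : Ins p (Fin.last (m + 1)) σ π) :
    (σ.symm (Fin.last m) : ℕ) < (p : ℕ) ↔ π.symm (Fin.last m).castSucc < p := by
  have h1 := h.2 (σ.symm (Fin.last m))
  rw [Equiv.apply_symm_apply, Fin.succAbove_last_apply] at h1
  rw [← h1, Equiv.symm_apply_apply, Fin.succAbove_lt_iff_castSucc_lt, Fin.lt_def]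
  simp

/-- Every 321-avoiding permutation of length `m+2` arises in exactly one way from a
321-avoiding permutation of length `m+1` by operation (a) (at a valid position) or
operation (b); moreover both operations are well defined on 321-avoiding permutations
and always produce 321-avoiding permutations.  A pair `(σ, some p)` encodes operation
(a) at insertion position `p`, and `(σ, none)` encodes operation (b). -/
theorem generation_of_321_avoiders (m : ℕ) :
    (∀ σ : Equiv.Perm (Fin (m + 1)), Avoids321 σ →
      (∀ (p : Fin (m + 2)) (π : Equiv.Perm (Fin (m + 2))),
          ResultA m σ p π → Avoids321 π) ∧
      (∀ π : Equiv.Perm (Fin (m + 2)), ResultB m σ π → Avoids321 π) ∧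
      (∀ p : Fin (m + 2), (σ.symm (Fin.last m) : ℕ) < (p : ℕ) →
          ∃! π : Equiv.Perm (Fin (m + 2)), ResultA m σ p π) ∧
      (∃! π : Equiv.Perm (Fin (m + 2)), ResultB m σ π)) ∧
    (∀ π : Equiv.Perm (Fin (m + 2)), Avoids321 π →
      ∃! w : Equiv.Perm (Fin (m + 1)) × Option (Fin (m + 2)),
        Avoids321 w.1 ∧
          (match w.2 with
            | some p => ResultA m w.1 p π
            | none => ResultB m w.1 π)) := by
  simp only [resultA_iff, resultB_iff]
  refine ⟨fun σ hs => ⟨fun p π h => avoidA hs h.1 h.2, fun π h => avoidB hs h, ?_, ?_⟩, ?_⟩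
  · intro p hp
    obtain ⟨π, h⟩ := Ins.exists p (Fin.last (m + 1)) σ
    exact ⟨π, ⟨hp, h⟩, fun π' h' => h'.2.unique h⟩
  · obtain ⟨π, h⟩ := Ins.exists (Fin.last (m + 1)) (Fin.last m).castSucc σ
    exact ⟨π, h, fun π' h' => h'.unique h⟩
  · intro π hπ
    have hP : π (π.symm (Fin.last (m + 1))) = Fin.last (m + 1) := π.apply_symm_apply _
    have hM : π (π.symm (Fin.last m).castSucc) = (Fin.last m).castSucc := π.apply_symm_apply _
    by_cases hlt : π.symm (Fin.last m).castSucc < π.symm (Fin.last (m + 1))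
    · obtain ⟨σ, h⟩ := Ins.exists' _ _ π hP
      refine ⟨(σ, some (π.symm (Fin.last (m + 1)))), ⟨h.avoid hπ, (insA_pos h).2 hlt, h⟩, ?_⟩
      rintro ⟨τ, _ | p⟩ ⟨h1, h2⟩
      · have h3 := h2.1
        rw [← h3, Equiv.symm_apply_apply] at hlt
        exact absurd hlt (not_lt.mpr (Fin.le_last _))
      · obtain ⟨_, h2⟩ := h2
        have hp : p = π.symm (Fin.last (m + 1)) := by rw [← h2.1, Equiv.symm_apply_apply]
        subst hp
        have h4 : τ = σ := h2.unique' h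
        rw [h4]
    · have hML : π (Fin.last (m + 1)) = (Fin.last m).castSucc := by
        by_contra hne
        have hPM : π.symm (Fin.last (m + 1)) < π.symm (Fin.last m).castSucc := by
          refine lt_of_le_of_ne (not_lt.mp hlt) ?_
          intro hh
          have := π.symm.injective hh
          simp [Fin.ext_iff] at this
        have hMl : π.symm (Fin.last m).castSucc < Fin.last (m + 1) := by
          refine lt_of_le_of_ne (Fin.le_last _) ?_
          intro hh
          exact hne (by rw [← hh, hM])
        have hne2 : π (Fin.last (m + 1)) ≠ Fin.last (m + 1) := by
          intro hh
          have h5 : π.symm (Fin.last (m + 1)) = Fin.last (m + 1) := by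
            rw [Equiv.symm_apply_eq, hh]
          rw [h5] at hPM
          exact absurd hPM (not_lt.mpr (Fin.le_last _))
        refine hπ ⟨_, _, _, hPM, hMl, ?_, ?_⟩
        · rw [hM]
          have := (π (Fin.last (m + 1))).isLt
          simp only [Fin.lt_def, Fin.ext_iff, ne_eq, Fin.val_castSucc, Fin.val_last] at *
          omega
        · rw [hM, hP]
          simp [Fin.lt_def]
      obtain ⟨σ, h⟩ := Ins.exists' _ _ π hML
      refine ⟨(σ, none), ⟨h.avoid hπ, h⟩, ?_⟩
      rintro ⟨τ, _ | p⟩ ⟨h1, h2⟩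
      · have h2 : Ins (Fin.last (m + 1)) (Fin.last m).castSucc τ π := h2
        rw [h2.unique' h]
      · obtain ⟨h3, h2⟩ := h2
        have hp : p = π.symm (Fin.last (m + 1)) := by rw [← h2.1, Equiv.symm_apply_apply]
        subst hp
        exact absurd ((insA_pos h2).1 h3) hlt
end

section
/- Let π be a 321-avoiding permutation of length n with one-line notation p₁p₂…p_n, together with an assignment of a label 1 or 2 to each entry such that the entries carrying each fixed label, read from left to right, are increasing. Define a graph G on 2n vertices {c₁,…,c_n} ∪ {i₁,…,i_n} as follows: {c₁,…,c_n} is a clique, {i₁,…,i_n} is an independent set, and for each j, if p_j is labelled 1 then the neighbourhood of i_{p_j} is {c₁, c₂, …, c_{p_j}}, while if p_j is labelled 2 then the neighbourhood of i_{p_j} is {c_{p_1}, c_{p_2}, …, c_{p_j}}. Then G is a symmetric split permutation graph, witnessed by the partitions C^t = {c_{p_j} : p_j labelled t} and I^t = {i_{p_j} : p_j labelled t} for t = 1, 2. -/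
/-- The graph associated with a labelled 321-avoiding permutation `π` with labelling `ℓ`
(`ℓ j = false` means the entry at position `j` is labelled 1, `ℓ j = true` means it is
labelled 2; everything is 0-indexed).  The vertices are `c_a = Sum.inl a` (forming a
clique) and `i_v = Sum.inr v` (forming an independent set) for `a, v : Fin n`.  If the
entry `v` (sitting at position `π.symm v`) is labelled 1, then `i_v` is adjacent to
exactly the `c_a` with `a ≤ v`; if it is labelled 2, then `i_v` is adjacent to exactly
the `c_a` whose index occurs at a position `≤ π.symm v`, i.e. with `π.symm a ≤ π.symm v`. -/
def phiGraph {n : ℕ} (π : Equiv.Perm (Fin n)) (ℓ : Fin n → Bool) :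
    SimpleGraph (Fin n ⊕ Fin n) :=
  SimpleGraph.fromRel (fun x y =>
    match x, y with
    | Sum.inl _, Sum.inl _ => True
    | Sum.inl a, Sum.inr v =>
        if ℓ (π.symm v) then π.symm a ≤ π.symm v else a ≤ v
    | _, _ => False)

theorem phi_threshold_aux {n : ℕ} (G : SimpleGraph (Fin n ⊕ Fin n)) (S : Set (Fin n ⊕ Fin n))
    (hC : ∀ a b : Fin n, a ≠ b → G.Adj (Sum.inl a) (Sum.inl b))
    (hI : ∀ a b : Fin n, ¬ G.Adj (Sum.inr a) (Sum.inr b))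
    (f : Fin n → Fin n)
    (h : ∀ a v, Sum.inl a ∈ S → Sum.inr v ∈ S →
      (G.Adj (Sum.inl a) (Sum.inr v) ↔ f a ≤ f v)) :
    IsThresholdGraph (G.induce S) := by
  have h' : ∀ a v, Sum.inl a ∈ S → Sum.inr v ∈ S →
      (G.Adj (Sum.inr v) (Sum.inl a) ↔ f a ≤ f v) := by
    intro a v ha hv
    rw [G.adj_comm, h a v ha hv]
  have key : ∀ x y : S, (G.induce S).neighborSet x ⊆ (G.induce S).neighborSet y ∪ {y} ↔
      ∀ z ∈ S, G.Adj x z → G.Adj y z ∨ z = y := by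
    intro x y
    constructor
    · intro hh z hz hx
      have := @hh ⟨z, hz⟩ (by simpa using hx)
      simpa [Subtype.ext_iff, or_comm] using this
    · rintro hh ⟨z, hz⟩ hx
      have := hh z hz (by simpa using hx)
      simpa [Subtype.ext_iff, or_comm] using this
  have il : ∀ a v, Sum.inl a ∈ S → Sum.inr v ∈ S → ∀ z ∈ S, G.Adj (Sum.inr v) z →
      G.Adj (Sum.inl a) z ∨ z = Sum.inl a := by
    rintro a v ha hv (c | w) hz hx
    · by_cases hac : a = c
      · right; rw [hac]
      · left; exact hC _ _ hac
    · exact absurd hx (hI _ _)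
  have ll : ∀ a b, Sum.inl a ∈ S → Sum.inl b ∈ S → f a ≤ f b → ∀ z ∈ S, G.Adj (Sum.inl b) z →
      G.Adj (Sum.inl a) z ∨ z = Sum.inl a := by
    rintro a b ha hb hab (c | w) hz hx
    · by_cases hac : a = c
      · right; rw [hac]
      · left; exact hC _ _ hac
    · left
      rw [h _ _ hb hz] at hx
      rw [h _ _ ha hz]
      exact hab.trans hx
  have rr : ∀ v w, Sum.inr v ∈ S → Sum.inr w ∈ S → f v ≤ f w → ∀ z ∈ S, G.Adj (Sum.inr v) z →
      G.Adj (Sum.inr w) z ∨ z = Sum.inr w := by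
    rintro v w hv hw hvw (c | u) hz hx
    · left
      rw [h' _ _ hz hv] at hx
      rw [h' _ _ hz hw]
      exact hx.trans hvw
    · exact absurd hx (hI _ _)
  rintro ⟨x, hx⟩ - ⟨y, hy⟩ -
  unfold VicinalLE
  rw [key, key]
  rcases x with a | v <;> rcases y with b | w
  · rcases le_total (f a) (f b) with hab | hab
    · right; exact ll a b hx hy hab
    · left; exact ll b a hy hx hab
  · right; exact il a w hx hy
  · left; exact il b v hy hx
  · rcases le_total (f v) (f w) with hab | hab
    · left; exact rr v w hx hy hab
    · right; exact rr w v hy hx hab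

theorem phi_univ_aux {n : ℕ} (G : SimpleGraph (Fin n ⊕ Fin n)) (s : Set (Fin n))
    (hC : ∀ a b : Fin n, a ≠ b → G.Adj (Sum.inl a) (Sum.inl b))
    (hI : ∀ a b : Fin n, ¬ G.Adj (Sum.inr a) (Sum.inr b))
    (h : ∀ a v, a ∈ s → v ∈ s → (G.Adj (Sum.inl a) (Sum.inr v) ↔ a ≤ v)) :
    ∃ m : ℕ, Nonempty (G.induce (Sum.inl '' s ∪ Sum.inr '' s) ≃g univThresholdGraph m) := by
  classical
  let e : Fin (Fintype.card s) ≃o s := Fintype.orderIsoFinOfCardEq s rfl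
  let F : Fin (Fintype.card s) ⊕ Fin (Fintype.card s) →
      (Sum.inl '' s ∪ Sum.inr '' s : Set (Fin n ⊕ Fin n)) :=
    Sum.elim (fun i => ⟨Sum.inl (e i).1, Or.inl ⟨_, (e i).2, rfl⟩⟩)
      (fun i => ⟨Sum.inr (e i).1, Or.inr ⟨_, (e i).2, rfl⟩⟩)
  have hF : Function.Bijective F := by
    constructor
    · rintro (a | a) (b | b) hab
      · have h1 : (e a).1 = (e b).1 := Sum.inl.inj (Subtype.ext_iff.1 hab)
        rw [e.injective (Subtype.ext h1)]
      · have h1 := Subtype.ext_iff.1 hab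
        simp [F] at h1
      · have h1 := Subtype.ext_iff.1 hab
        simp [F] at h1
      · have h1 : (e a).1 = (e b).1 := Sum.inr.inj (Subtype.ext_iff.1 hab)
        rw [e.injective (Subtype.ext h1)]
    · rintro ⟨x, ⟨a, ha, rfl⟩ | ⟨a, ha, rfl⟩⟩
      · exact ⟨Sum.inl (e.symm ⟨a, ha⟩), by simp [F]⟩
      · exact ⟨Sum.inr (e.symm ⟨a, ha⟩), by simp [F]⟩
  have hle : ∀ a b, (e a).1 ≤ (e b).1 ↔ (a : ℕ) ≤ (b : ℕ) := fun a b => by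
    rw [Subtype.coe_le_coe, e.le_iff_le, Fin.le_def]
  refine ⟨Fintype.card s, ⟨RelIso.symm ⟨Equiv.ofBijective F hF, ?_⟩⟩⟩
  rintro (a | a) (b | b)
  · change G.Adj (Sum.inl (e a).1) (Sum.inl (e b).1) ↔ _
    by_cases hab : a = b
    · subst hab; simp
    · have : (e a).1 ≠ (e b).1 := fun h1 => hab (e.injective (Subtype.ext h1))
      simp [univThresholdGraph, hab, hC _ _ this]
  · change G.Adj (Sum.inl (e a).1) (Sum.inr (e b).1) ↔ _
    rw [h _ _ (e a).2 (e b).2, hle]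
    simp [univThresholdGraph]
  · change G.Adj (Sum.inr (e a).1) (Sum.inl (e b).1) ↔ _
    rw [G.adj_comm, h _ _ (e b).2 (e a).2, hle]
    simp [univThresholdGraph]
  · change G.Adj (Sum.inr (e a).1) (Sum.inr (e b).1) ↔ _
    simp [univThresholdGraph, hI]

/-- The graph built from a labelled 321-avoiding permutation is a symmetric split
permutation graph, witnessed by the partition `Cᵗ = {c_v : entry v labelled t}`,
`Iᵗ = {i_v : entry v labelled t}`. -/
theorem phiGraph_isSymSplitPerm (n : ℕ) (π : Equiv.Perm (Fin n)) (ℓ : Fin n → Bool)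
    (havoid : Avoids321 π)
    (hmono : ∀ i j : Fin n, i < j → ℓ i = ℓ j → π i < π j) :
    IsSymSplitPermWith (phiGraph π ℓ)
      (Sum.inl '' {a : Fin n | ℓ (π.symm a) = false})
      (Sum.inl '' {a : Fin n | ℓ (π.symm a) = true})
      (Sum.inr '' {v : Fin n | ℓ (π.symm v) = false})
      (Sum.inr '' {v : Fin n | ℓ (π.symm v) = true}) := by
  have hC : ∀ a b : Fin n, a ≠ b → (phiGraph π ℓ).Adj (Sum.inl a) (Sum.inl b) := by
    intro a b hab
    simp [phiGraph, hab]
  have hI : ∀ a b : Fin n, ¬ (phiGraph π ℓ).Adj (Sum.inr a) (Sum.inr b) := by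
    intro a b
    simp [phiGraph]
  have hA : ∀ a v : Fin n, (phiGraph π ℓ).Adj (Sum.inl a) (Sum.inr v) ↔
      if ℓ (π.symm v) then π.symm a ≤ π.symm v else a ≤ v := by
    intro a v
    simp [phiGraph]
  have hlt : ∀ a b : Fin n, ℓ (π.symm a) = ℓ (π.symm b) → π.symm a < π.symm b → a < b := by
    intro a b hab hlt
    simpa using hmono _ _ hlt hab
  have hle : ∀ a b : Fin n, ℓ (π.symm a) = ℓ (π.symm b) →
      (π.symm a ≤ π.symm b ↔ a ≤ b) := by
    intro a b hab
    constructor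
    · intro h
      rcases h.lt_or_eq with h | h
      · exact (hlt _ _ hab h).le
      · exact (π.symm.injective h).le
    · intro h
      by_contra h'
      exact absurd (hlt _ _ hab.symm (not_le.1 h')) (not_lt.2 h)
  refine ⟨?_, ?_, ?_, ?_, ?_, ?_, ?_, ?_, ?_, ?_, ?_, ?_⟩
  · ext x
    rcases x with a | a <;> simp
  · rw [Set.disjoint_left]
    rintro _ ⟨a, ha, rfl⟩ ⟨b, hb, hab⟩
    cases hab
    simp_all
  · rw [Set.disjoint_left]
    rintro _ ⟨a, ha, rfl⟩ ⟨b, hb, hab⟩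
    cases hab
    simp_all
  · rw [Set.disjoint_left]
    rintro _ (⟨a, ha, rfl⟩ | ⟨a, ha, rfl⟩) (⟨b, hb, hab⟩ | ⟨b, hb, hab⟩) <;> cases hab
  · rintro _ (⟨a, ha, rfl⟩ | ⟨a, ha, rfl⟩) _ (⟨b, hb, rfl⟩ | ⟨b, hb, rfl⟩) hab <;>
      exact hC _ _ (fun h => hab (by rw [h]))
  · rintro _ (⟨a, ha, rfl⟩ | ⟨a, ha, rfl⟩) _ (⟨b, hb, rfl⟩ | ⟨b, hb, rfl⟩) <;> exact hI _ _
  · refine phi_threshold_aux _ _ hC hI π.symm ?_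
    intro a v ha hv
    have ha' : ℓ (π.symm a) = false := by simpa using ha
    rw [hA]
    split_ifs with hl
    · rfl
    · rw [hle]; simp [ha', hl]
  · refine phi_threshold_aux _ _ hC hI id ?_
    intro a v ha hv
    have ha' : ℓ (π.symm a) = true := by simpa using ha
    rw [hA]
    split_ifs with hl
    · rw [hle, id, id]; simp [ha', hl]
    · rfl
  · refine phi_threshold_aux _ _ hC hI id ?_
    intro a v ha hv
    have hv' : ℓ (π.symm v) = false := by simpa using hv
    rw [hA]
    simp [hv']
  · refine phi_threshold_aux _ _ hC hI π.symm ?_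
    intro a v ha hv
    have hv' : ℓ (π.symm v) = true := by simpa using hv
    rw [hA]
    simp [hv']
  · refine phi_univ_aux _ _ hC hI ?_
    intro a v ha hv
    have hv' : ℓ (π.symm v) = false := hv
    rw [hA]
    simp [hv']
  · refine phi_univ_aux _ _ hC hI ?_
    intro a v ha hv
    have ha' : ℓ (π.symm a) = true := ha
    have hv' : ℓ (π.symm v) = true := hv
    rw [hA, if_pos hv', hle _ _ (ha'.trans hv'.symm)]
end
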